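/- arXiv:1909.07878 — 4 statements merged into one kernel-verified Lean document; each statement's English description precedes it below -/
import Mathlib

section
/- For a finite simple graph G, the following are equivalent: (1) G has a fractional perfect matching; (2) there is a partition V₁, V₂, …, V_m of the vertex set V(G) such that, for each i, the induced subgraph G[V_i] is either a complete graph on two vertices K₂ or a Hamiltonian graph; (3) there is a partition V₁, V₂, …, V_m of V(G) such that, for each i, the induced subgraph G[V_i] is either K₂ or a Hamiltonian graph on an odd number of vertices. -/
open Finset

variable {V : Type*}

/-- A fractional perfect matching of a finite simple graph. -/
def SimpleGraph.IsFracPerfectMatching [Fintype V] [DecidableEq V]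
    (G : SimpleGraph V) (f : Sym2 V → ℝ) : Prop :=
  (∀ e, 0 ≤ f e ∧ f e ≤ 1) ∧ (∀ e, e ∉ G.edgeSet → f e = 0) ∧
    ∀ v : V, ∑ e ∈ Finset.univ.filter (fun e : Sym2 V => v ∈ e), f e = 1

/-- `G` has a fractional perfect matching. -/
def SimpleGraph.HasFPM [Fintype V] [DecidableEq V] (G : SimpleGraph V) : Prop :=
  ∃ f, G.IsFracPerfectMatching f

/-- The fractional matching preclusion number of `G`. -/
noncomputable def SimpleGraph.fmp [Fintype V] [DecidableEq V] (G : SimpleGraph V) : ℕ :=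
  sInf {k | ∃ F : Finset (Sym2 V), ↑F ⊆ G.edgeSet ∧ F.card = k ∧
    ¬ (G.deleteEdges ↑F).HasFPM}

/-- The minimum degree of `G`. -/
noncomputable def SimpleGraph.minDeg [Fintype V] (G : SimpleGraph V) : ℕ :=
  sInf {d | ∃ v : V, (G.neighborSet v).ncard = d}

/-- A graph contains a Hamiltonian cycle. -/
def SimpleGraph.IsHamil {W : Type*} [DecidableEq W] (G : SimpleGraph W) : Prop :=
  ∃ (a : W) (p : G.Walk a a), p.IsHamiltonianCycle

/-- The induced subgraph on `A` is a `K₂`. -/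
def SimpleGraph.IsK2Part [DecidableEq V] (G : SimpleGraph V) (A : Finset V) : Prop :=
  ∃ u v : V, A = {u, v} ∧ G.Adj u v

/-!
By Birkhoff's theorem, a fractional perfect matching, read as a doubly stochastic matrix, has a
permutation in its support, that is, a permutation moving every vertex to a neighbour. The orbits
of such a permutation are edges or carry Hamiltonian cycles. Conversely, going round each part of
a partition into edges and Hamiltonian graphs gives such a permutation, and averaging its matrix
with the transpose gives a fractional perfect matching. A Hamiltonian part of even order can be cut
into edges, because removing one edge of the cycle leaves a path of odd length.
-/

/-- A permutation moving every vertex to a neighbour. Its orbits are edges (traversed back and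
forth) and directed cycles of `G`, so it is the integral counterpart of a fractional perfect
matching. -/
def IsAdjPerm (G : SimpleGraph V) (σ : Equiv.Perm V) : Prop :=
  ∀ v, G.Adj v (σ v)

section DoublyStochastic

variable [Fintype V] [DecidableEq V] {G : SimpleGraph V}

theorem sum_filter_mem_sym2 {M : Type*} [AddCommMonoid M] (f : Sym2 V → M) (v : V) :
    ∑ e ∈ univ.filter (fun e : Sym2 V => v ∈ e), f e = ∑ u, f s(v, u) := by
  refine (sum_bij (fun u _ => s(v, u)) (by simp) (fun _ _ _ _ h => Sym2.congr_right.mp h)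
    (fun e he => ?_) fun _ _ => rfl).symm
  obtain ⟨u, rfl⟩ := (mem_filter.mp he).2
  exact ⟨u, mem_univ u, rfl⟩

theorem exists_doublyStochastic_of_hasFPM (h : G.HasFPM) :
    ∃ M ∈ doublyStochastic ℝ V, ∀ u v, M u v ≠ 0 → G.Adj u v := by
  obtain ⟨f, hf_mem, hf_edge, hf_sum⟩ := h
  have row_sum (v : V) : ∑ u, f s(v, u) = 1 := sum_filter_mem_sym2 f v ▸ hf_sum v
  refine ⟨.of fun u v => f s(u, v), mem_doublyStochastic_iff_sum.mpr
    ⟨fun u v => (hf_mem _).1, row_sum, fun v => ?_⟩, fun u v huv => ?_⟩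
  · simpa only [Matrix.of_apply, Sym2.eq_swap (b := v)] using row_sum v
  · exact not_not.mp (mt (hf_edge s(u, v)) huv)

-- Averaging `M` with its transpose makes it a function on unordered pairs.
theorem hasFPM_of_doublyStochastic {M : Matrix V V ℝ} (hM : M ∈ doublyStochastic ℝ V)
    (hadj : ∀ u v, M u v ≠ 0 → G.Adj u v) : G.HasFPM := by
  let f : Sym2 V → ℝ :=
    Sym2.lift ⟨fun u v => (M u v + M v u) / 2, fun _ _ => congrArg (· / 2) (add_comm _ _)⟩
  have nonneg (u v : V) : 0 ≤ M u v := nonneg_of_mem_doublyStochastic hM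
  have le_one (u v : V) : M u v ≤ 1 := le_one_of_mem_doublyStochastic hM
  refine ⟨f, fun e => ?_, fun e he => ?_, fun v => ?_⟩
  · induction e with | h u v => ?_
    simp only [f, Sym2.lift_mk]
    constructor <;> linarith [nonneg u v, nonneg v u, le_one u v, le_one v u]
  · induction e with | h u v => ?_
    have huv : M u v = 0 := not_not.mp (mt (hadj u v) he)
    have hvu : M v u = 0 := not_not.mp (mt (hadj v u) (mt G.adj_symm he))
    simp [f, huv, hvu]
  · simp only [sum_filter_mem_sym2, f, Sym2.lift_mk, ← sum_div, sum_add_distrib,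
      sum_row_of_mem_doublyStochastic hM, sum_col_of_mem_doublyStochastic hM]
    norm_num

theorem exists_perm_apply_ne_zero_of_mem_doublyStochastic {R : Type*} [Field R] [LinearOrder R]
    [IsStrictOrderedRing R] {M : Matrix V V R} (hM : M ∈ doublyStochastic R V) :
    ∃ σ : Equiv.Perm V, ∀ v, M v (σ v) ≠ 0 := by
  obtain ⟨w, hw_nonneg, hw_sum, rfl⟩ := exists_eq_sum_perm_of_mem_doublyStochastic hM
  obtain ⟨σ, -, hσ⟩ := exists_ne_zero_of_sum_ne_zero (hw_sum.trans_ne one_ne_zero)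
  refine ⟨σ, fun v => ne_of_gt ?_⟩
  calc 0 < w σ * σ.permMatrix R v (σ v) := by
        simpa [Equiv.Perm.permMatrix, PEquiv.toMatrix_apply] using (hw_nonneg σ).lt_of_ne' hσ
    _ ≤ ∑ τ, w τ * τ.permMatrix R v (σ v) :=
        single_le_sum (f := fun τ => w τ * τ.permMatrix R v (σ v))
          (fun τ _ => mul_nonneg (hw_nonneg τ)
            (nonneg_of_mem_doublyStochastic permMatrix_mem_doublyStochastic)) (mem_univ σ)
    _ = (∑ τ, w τ • τ.permMatrix R) v (σ v) := by
        simp only [Matrix.sum_apply, Matrix.smul_apply, smul_eq_mul]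

theorem hasFPM_iff_exists_isAdjPerm : G.HasFPM ↔ ∃ σ, IsAdjPerm G σ := by
  refine ⟨fun h => ?_, fun ⟨σ, hσ⟩ => ?_⟩
  · obtain ⟨M, hM, hadj⟩ := exists_doublyStochastic_of_hasFPM h
    obtain ⟨σ, hσ⟩ := exists_perm_apply_ne_zero_of_mem_doublyStochastic hM
    exact ⟨σ, fun v => hadj v (σ v) (hσ v)⟩
  · refine hasFPM_of_doublyStochastic (permMatrix_mem_doublyStochastic (σ := σ)) fun u v huv => ?_
    obtain rfl : σ u = v := by
      simpa [Equiv.Perm.permMatrix, PEquiv.toMatrix_apply] using huv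
    exact hσ u

end DoublyStochastic

section Orbits

theorem exists_finpartition_isCycleOn [Fintype V] [DecidableEq V] (σ : Equiv.Perm V) :
    ∃ P : Finpartition (univ : Finset V), ∀ A ∈ P.parts, σ.IsCycleOn (A : Set V) := by
  classical
  refine ⟨.ofSetoid (Equiv.Perm.SameCycle.setoid σ), fun A hA => ?_⟩
  obtain ⟨v, -, rfl⟩ := Finpartition.part_surjOn _ hA
  have mem_part (w : V) : w ∈ (Finpartition.ofSetoid (Equiv.Perm.SameCycle.setoid σ)).part v ↔
      σ.SameCycle v w := Finpartition.mem_part_ofSetoid_iff_rel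
  refine ⟨σ.bijOn fun w => ?_, fun w hw x hx => ?_⟩
  · simp only [mem_coe, mem_part, Equiv.Perm.sameCycle_apply_right]
  · exact ((mem_part w).mp hw).symm.trans ((mem_part x).mp hx)

variable {G : SimpleGraph V} {σ : Equiv.Perm V}

theorem IsAdjPerm.cycleGraph_isContained [Fintype V] [Nonempty V] (hσ : IsAdjPerm G σ)
    (hcycle : σ.IsCycleOn (Set.univ : Set V)) :
    (SimpleGraph.cycleGraph (Fintype.card V)).IsContained G := by
  obtain ⟨v⟩ := ‹Nonempty V›
  have pow_eq_pow {m n : ℕ} : (σ ^ m) v = (σ ^ n) v ↔ m ≡ n [MOD Fintype.card V] :=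
    Equiv.Perm.IsCycleOn.pow_apply_eq_pow_apply (s := univ) (by simpa using hcycle) (mem_univ v)
  have adj_of_sub_eq_one {i j : Fin (Fintype.card V)} (hij : (j - i).val = 1) :
      G.Adj ((σ ^ i.val) v) ((σ ^ j.val) v) := by
    have hmod : j.val ≡ i.val + 1 [MOD Fintype.card V] := by
      have hval := congrArg Fin.val (sub_add_cancel j i)
      rw [Fin.val_add, hij, add_comm] at hval
      rw [← hval]
      exact Nat.mod_modEq _ _
    rw [pow_eq_pow.mpr hmod, pow_succ', Equiv.Perm.mul_apply]
    exact hσ _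
  refine ⟨⟨⟨fun i => (σ ^ i.val) v, fun {i j} hij => ?_⟩, fun i j hij => ?_⟩⟩
  · rcases SimpleGraph.cycleGraph_adj'.mp hij with h | h
    · exact (adj_of_sub_eq_one h).symm
    · exact adj_of_sub_eq_one h
  · exact Fin.ext ((pow_eq_pow.mp hij).eq_of_lt_of_lt i.2 j.2)

theorem IsAdjPerm.isHamil [Fintype V] [DecidableEq V] (hσ : IsAdjPerm G σ)
    (hcycle : σ.IsCycleOn (Set.univ : Set V)) (hcard : 2 < Fintype.card V) : G.IsHamil := by
  have : Nonempty V := Fintype.card_pos_iff.mp (by omega)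
  obtain ⟨a, p, hp, hlen⟩ := (SimpleGraph.cycleGraph_isContained_iff hcard).mp
    (hσ.cycleGraph_isContained hcycle)
  exact ⟨a, p, SimpleGraph.Walk.isHamiltonianCycle_iff_isCycle_and_length_eq.mpr ⟨hp, hlen⟩⟩

theorem IsAdjPerm.isK2Part_or_isHamil_induce [DecidableEq V] (hσ : IsAdjPerm G σ) {A : Finset V}
    (hA : A.Nonempty) (hcycle : σ.IsCycleOn (A : Set V)) :
    G.IsK2Part A ∨ (G.induce (A : Set V)).IsHamil := by
  obtain ⟨v, hv⟩ := hA
  have hσv : σ v ∈ A := hcycle.apply_mem_iff.mpr hv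
  have hsub : {v, σ v} ⊆ A := by simp [insert_subset_iff, hv, hσv]
  have hpair : #{v, σ v} = 2 := card_pair (hσ v).ne
  rcases (hpair ▸ card_le_card hsub).eq_or_lt with hcard | hcard
  · exact .inl ⟨v, σ v, (eq_of_subset_of_card_le hsub (by omega)).symm, hσ v⟩
  · have hσA : IsAdjPerm (G.induce (A : Set V))
        (σ.subtypePerm fun _ => hcycle.apply_mem_iff) := fun w => hσ w
    exact .inr (hσA.isHamil hcycle.subtypePerm (by simpa using hcard))

theorem IsAdjPerm.exists_finpartition [Fintype V] [DecidableEq V] (hσ : IsAdjPerm G σ) :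
    ∃ P : Finpartition (univ : Finset V),
      ∀ A ∈ P.parts, G.IsK2Part A ∨ (G.induce (A : Set V)).IsHamil := by
  obtain ⟨P, hP⟩ := exists_finpartition_isCycleOn σ
  exact ⟨P, fun A hA => hσ.isK2Part_or_isHamil_induce (P.nonempty_of_mem_parts hA) (hP A hA)⟩

end Orbits

section Gluing

variable [DecidableEq V] {G : SimpleGraph V}

theorem adj_formPerm_support_apply {u v w : V} {p : G.Walk u v} (hp : p.IsPath)
    (hclose : G.Adj v u) (hw : w ∈ p.support) : G.Adj w (p.support.formPerm w) := by
  obtain ⟨i, hi, rfl⟩ := List.getElem_of_mem hw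
  rw [List.formPerm_apply_getElem _ hp.support_nodup]
  rw [SimpleGraph.Walk.length_support] at hi
  simp only [SimpleGraph.Walk.length_support, SimpleGraph.Walk.support_getElem_eq_getVert]
  rcases (Nat.lt_succ_iff.mp hi).eq_or_lt with rfl | hlt
  · simpa using hclose
  · rw [Nat.mod_eq_of_lt (by omega)]
    exact p.adj_getVert_succ hlt

theorem exists_isAdjPerm_of_isHamil (h : G.IsHamil) : ∃ σ, IsAdjPerm G σ := by
  obtain ⟨a, p, hp⟩ := h
  exact ⟨p.tail.support.formPerm, fun v => adj_formPerm_support_apply hp.isCycle.isPath_tail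
    (p.adj_snd hp.isCycle.not_nil) (hp.isHamiltonian_tail.mem_support v)⟩

theorem exists_isAdjPerm_induce_of_isK2Part {A : Finset V} (h : G.IsK2Part A) :
    ∃ σ, IsAdjPerm (G.induce (A : Set V)) σ := by
  obtain ⟨u, v, rfl, huv⟩ := h
  refine ⟨Equiv.swap ⟨u, by simp⟩ ⟨v, by simp⟩, fun ⟨w, hw⟩ => ?_⟩
  obtain rfl | rfl : w = u ∨ w = v := by simpa using hw
  · simpa using huv
  · simpa using huv.symm

theorem exists_isAdjPerm_of_finpartition [Fintype V] (P : Finpartition (univ : Finset V))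
    (hP : ∀ A ∈ P.parts, ∃ σ, IsAdjPerm (G.induce (A : Set V)) σ) : ∃ σ, IsAdjPerm G σ := by
  choose σ hσ using fun A : P.parts => hP A A.2
  let e : V ≃ Σ A : P.parts, A.1 := (Equiv.subtypeUnivEquiv mem_univ).symm.trans P.equivSigmaParts
  refine ⟨e.symm.permCongr (Equiv.sigmaCongrRight σ), fun v => ?_⟩
  exact hσ (e v).1 (e v).2

end Gluing

section Splitting

variable [DecidableEq V] {G : SimpleGraph V}

theorem exists_finpartition_isK2Part_of_isPath {u v : V} (p : G.Walk u v) (hp : p.IsPath)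
    (hlen : Odd p.length) :
    ∃ P : Finpartition p.support.toFinset, ∀ A ∈ P.parts, G.IsK2Part A := by
  match p with
  | .nil => simp at hlen
  | .cons huv .nil =>
    refine ⟨(Finpartition.indiscrete (insert_nonempty u {v}).ne_empty).copy (by simp), ?_⟩
    exact fun A hA => ⟨u, v, mem_singleton.mp hA, huv⟩
  | .cons (v := w) huw (.cons hwx q) =>
    rw [SimpleGraph.Walk.cons_isPath_iff, SimpleGraph.Walk.cons_isPath_iff] at hp
    obtain ⟨P, hP⟩ := exists_finpartition_isK2Part_of_isPath q hp.1.1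
      (by simpa [Nat.odd_add_one] using hlen)
    have hdisj : Disjoint q.support.toFinset {u, w} := by simp_all
    refine ⟨P.extend (insert_nonempty u {w}).ne_empty hdisj (by ext; simp), fun A hA => ?_⟩
    rcases mem_insert.mp hA with rfl | hA
    · exact ⟨u, w, rfl, huw⟩
    · exact hP A hA

theorem exists_finpartition_isK2Part_of_isHamil_induce {A : Finset V} (hA : Even #A)
    (h : (G.induce (A : Set V)).IsHamil) :
    ∃ P : Finpartition A, ∀ B ∈ P.parts, G.IsK2Part B := by
  obtain ⟨a, p, hp⟩ := h
  set q := p.tail.map (SimpleGraph.Embedding.induce (A : Set V)).toHom with hq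
  have hq_path : q.IsPath := hp.isCycle.isPath_tail.map Subtype.val_injective
  have hq_length : q.length + 1 = #A := by
    rw [hq, SimpleGraph.Walk.length_map, p.length_tail_add_one hp.isCycle.not_nil, hp.length_eq]
    simp
  have hq_support : q.support.toFinset = A := by
    ext v
    rw [hq, List.mem_toFinset, SimpleGraph.Walk.support_map]
    simp [hp.isHamiltonian_tail.mem_support]
  obtain ⟨P, hP⟩ := exists_finpartition_isK2Part_of_isPath q hq_path (by grind)
  exact ⟨P.copy hq_support, hP⟩

theorem exists_finpartition_isK2Part_or_odd_isHamil_induce {A : Finset V} (hA : A.Nonempty)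
    (h : G.IsK2Part A ∨ (G.induce (A : Set V)).IsHamil) :
    ∃ P : Finpartition A, ∀ B ∈ P.parts,
      G.IsK2Part B ∨ (Odd #B ∧ (G.induce (B : Set V)).IsHamil) := by
  by_cases hsplit : Even #A ∧ (G.induce (A : Set V)).IsHamil
  · obtain ⟨P, hP⟩ := exists_finpartition_isK2Part_of_isHamil_induce hsplit.1 hsplit.2
    exact ⟨P, fun B hB => .inl (hP B hB)⟩
  · refine ⟨.indiscrete hA.ne_empty, fun B hB => ?_⟩
    obtain rfl := mem_singleton.mp hB
    exact h.imp_right fun hham => ⟨Nat.not_even_iff_odd.mp fun he => hsplit ⟨he, hham⟩, hham⟩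

theorem exists_finpartition_odd_of_finpartition {S : Finset V} (P : Finpartition S)
    (hP : ∀ A ∈ P.parts, G.IsK2Part A ∨ (G.induce (A : Set V)).IsHamil) :
    ∃ Q : Finpartition S, ∀ A ∈ Q.parts,
      G.IsK2Part A ∨ (Odd #A ∧ (G.induce (A : Set V)).IsHamil) := by
  choose R hR using fun A hA =>
    exists_finpartition_isK2Part_or_odd_isHamil_induce (P.nonempty_of_mem_parts hA) (hP A hA)
  refine ⟨P.bind R, fun B hB => ?_⟩
  obtain ⟨A, hA, hBA⟩ := Finpartition.mem_bind.mp hB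
  exact hR A hA B hBA

end Splitting

theorem hasFPM_iff_exists_finpartition [Fintype V] [DecidableEq V] {G : SimpleGraph V} :
    G.HasFPM ↔ ∃ P : Finpartition (univ : Finset V),
      ∀ A ∈ P.parts, G.IsK2Part A ∨ (G.induce (A : Set V)).IsHamil := by
  rw [hasFPM_iff_exists_isAdjPerm]
  refine ⟨fun ⟨σ, hσ⟩ => hσ.exists_finpartition, fun ⟨P, hP⟩ => ?_⟩
  exact exists_isAdjPerm_of_finpartition P fun A hA =>
    (hP A hA).elim exists_isAdjPerm_induce_of_isK2Part exists_isAdjPerm_of_isHamil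

theorem hasFPM_iff_partition [Fintype V] [DecidableEq V] (G : SimpleGraph V) :
    (G.HasFPM ↔ ∃ P : Finpartition (Finset.univ : Finset V),
        ∀ A ∈ P.parts, G.IsK2Part A ∨ (G.induce (A : Set V)).IsHamil) ∧
    (G.HasFPM ↔ ∃ P : Finpartition (Finset.univ : Finset V),
        ∀ A ∈ P.parts, G.IsK2Part A ∨ (Odd A.card ∧ (G.induce (A : Set V)).IsHamil)) := by
  refine ⟨hasFPM_iff_exists_finpartition, hasFPM_iff_exists_finpartition.trans ⟨?_, ?_⟩⟩
  · rintro ⟨P, hP⟩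
    exact exists_finpartition_odd_of_finpartition P hP
  · rintro ⟨P, hP⟩
    exact ⟨P, fun A hA => (hP A hA).imp_right And.right⟩
end

section
/- Let n and k be positive integers with 6 ≤ k ≤ n − 1, and write n = ℓ·(k+1) + r with 0 ≤ r ≤ k. If (a) r = 0, or (b) r ≥ 1 and k + r is odd, or (c) r ≥ 1, k + r is even, k is even, and ℓ ≥ 2, then s(n,k) = nk/2; that is, the minimum number of edges of a graph of order n with fractional matching preclusion number k equals nk/2. -/
open Finset

variable {V : Type*}

/-!
Deleting all edges at a vertex destroys every fractional perfect matching, so `fmp` is at most the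
minimum degree and a graph of order `n` with `fmp = k` has at least `nk/2` edges. For the converse
one needs a `k`-regular graph of order `n` that keeps a fractional perfect matching after the
deletion of fewer than `k` edges.

By Hall's theorem a graph has a fractional perfect matching unless some independent set `S` has all
its neighbours in a smaller set `T`, so it suffices that at least `k` edges leave `S` without ending
in `T` whenever `S` and `T` are disjoint and `#T < #S`. In a `k`-regular graph on at most
`2k + 1` vertices every proper cut has at least `k` edges, and comparing the degree sums over `S`
and `T` settles the case `S ∪ T ≠ V`. If `T = Sᶜ`, then twice the number of edges inside `S` is at
least `k (#S - #Sᶜ)`, which suffices when the order is even; in `K_{k+1}` with `k ≥ 6` the edges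
inside `S` can be counted directly.

Regular graphs of even order `2h`, `h ≤ k < 2h`, are complements of Cayley graphs of the dihedral
group with respect to a set of reflections. Disjoint unions preserve the property, and
`n = ℓ(k + 1) + r` is a sum of copies of `k + 1`, together with `k + 1 + r` in case (b), and with
`k + 2` and `k + r` in case (c).
-/

theorem hasFPM_of_injective [Fintype V] [DecidableEq V] {G : SimpleGraph V} {σ : V → V}
    (hσ : Function.Injective σ) (hadj : ∀ v, G.Adj v (σ v)) : G.HasFPM := by
  let f : Sym2 V → ℝ := fun e => ∑ u : V, if s(u, σ u) = e then 1 / 2 else 0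
  have f_nonneg : ∀ e, 0 ≤ f e := fun e => sum_nonneg fun u _ => by split_ifs <;> norm_num
  have load_of_edge (u v : V) : (∑ e : Sym2 V with v ∈ e, if s(u, σ u) = e then (1 / 2 : ℝ) else 0)
      = (if u = v then 1 / 2 else 0) + if σ u = v then 1 / 2 else 0 := by
    have := (hadj u).ne
    rw [sum_ite_eq]
    simp only [mem_filter, mem_univ, true_and, Sym2.mem_iff]
    grind
  have sum_f (v : V) : ∑ e : Sym2 V with v ∈ e, f e = 1 := by
    rw [sum_comm]
    simp only [load_of_edge, sum_add_distrib]
    rw [(Finite.injective_iff_bijective.mp hσ).sum_comp (fun w => if w = v then (1 / 2 : ℝ) else 0)]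
    norm_num
  refine ⟨f, fun e => ⟨f_nonneg e, ?_⟩, fun e he => ?_, sum_f⟩
  · induction e with
    | _ a b =>
      rw [← sum_f a]
      exact single_le_sum (fun e _ => f_nonneg e) (by simp)
  · refine sum_eq_zero fun u _ => if_neg ?_
    rintro rfl
    exact he (hadj u)

theorem hasFPM_of_forall_exists_adj [Fintype V] [DecidableEq V] {G : SimpleGraph V}
    (h : ∀ S T : Finset V, Disjoint S T → #T < #S → ∃ u ∈ S, ∃ v ∉ T, G.Adj u v) : G.HasFPM := by
  classical
  suffices hall : ∀ A : Finset V, #A ≤ #{v | ∃ u ∈ A, G.Adj u v} by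
    obtain ⟨σ, hσ, hadj⟩ := (Fintype.all_card_le_filter_rel_iff_exists_injective G.Adj).mp hall
    exact hasFPM_of_injective hσ hadj
  intro A
  by_contra! hA
  -- A Hall violator need not be independent, but its part outside its own neighbourhood is.
  set N : Finset V := {v | ∃ u ∈ A, G.Adj u v} with hN
  obtain ⟨u, hu, v, hv, huv⟩ := h (A \ N) (N \ A) disjoint_sdiff_sdiff
    (card_sdiff_lt_card_sdiff_iff.mpr hA)
  have hvN : v ∈ N := by simpa [hN] using ⟨u, (mem_sdiff.mp hu).1, huv⟩
  have hvA : v ∈ A := by simpa [hvN] using hv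
  exact (mem_sdiff.mp hu).2 (by simpa [hN] using ⟨v, hvA, huv.symm⟩)

theorem degree_eq_ncard_neighborSet (G : SimpleGraph V) (v : V) [Fintype (G.neighborSet v)] :
    G.degree v = (G.neighborSet v).ncard := by
  rw [← SimpleGraph.card_neighborSet_eq_degree, ← Nat.card_eq_fintype_card, Nat.card_coe_set_eq]

theorem card_filter_mem_mk [DecidableEq V] {a b : V} (hab : a ≠ b)
    (U : Finset V) :
    #{v ∈ U | v ∈ s(a, b)} = (if a ∈ U then 1 else 0) + if b ∈ U then 1 else 0 := by
  have : {v ∈ U | v ∈ s(a, b)} = {v ∈ ({a, b} : Finset V) | v ∈ U} := by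
    ext v
    simp [and_comm]
  rw [this, card_filter, sum_pair hab]

section EdgeCounts

variable [Fintype V] [DecidableEq V] (G : SimpleGraph V) [DecidableRel G.Adj]

/-- The edges with both endpoints in `U`. -/
def internalEdges (U : Finset V) : Finset (Sym2 V) :=
  {e ∈ G.edgeFinset | ∀ v ∈ e, v ∈ U}

/-- The edge cut between `U` and its complement. -/
def cutEdges (U : Finset V) : Finset (Sym2 V) :=
  {e ∈ G.edgeFinset | (∃ v ∈ e, v ∈ U) ∧ ∃ v ∈ e, v ∉ U}

/-- The edges that meet `S` but not `T`: those to be deleted before `S` becomes an independent set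
all of whose neighbours lie in `T`. -/
def escapingEdges (S T : Finset V) : Finset (Sym2 V) :=
  {e ∈ G.edgeFinset | (∃ v ∈ e, v ∈ S) ∧ ∀ v ∈ e, v ∉ T}

theorem sum_degree_eq_sum_card_filter_mem (U : Finset V) :
    ∑ v ∈ U, G.degree v = ∑ e ∈ G.edgeFinset, #{v ∈ U | v ∈ e} := by
  simp only [← G.card_incidenceFinset_eq_degree, G.incidenceFinset_eq_filter]
  exact sum_card_bipartiteAbove_eq_sum_card_bipartiteBelow (fun v e => v ∈ e)

theorem sum_degree_eq_two_mul_card_internalEdges_add_card_cutEdges (U : Finset V) :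
    ∑ v ∈ U, G.degree v = 2 * #(internalEdges G U) + #(cutEdges G U) := by
  rw [sum_degree_eq_sum_card_filter_mem, internalEdges, cutEdges, card_filter, card_filter,
    mul_sum, ← sum_add_distrib]
  refine sum_congr rfl fun e he => ?_
  induction e with
  | _ a b =>
    rw [card_filter_mem_mk (SimpleGraph.mem_edgeFinset.mp he).ne]
    by_cases ha : a ∈ U <;> by_cases hb : b ∈ U <;> simp [ha, hb]

theorem sum_degree_add_card_cutEdges_le {S T : Finset V} (hST : Disjoint S T) :
    ∑ v ∈ S, G.degree v + #(cutEdges G (S ∪ T)) ≤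
      2 * #(escapingEdges G S T) + ∑ v ∈ T, G.degree v := by
  rw [sum_degree_eq_sum_card_filter_mem, sum_degree_eq_sum_card_filter_mem, escapingEdges, cutEdges,
    card_filter, card_filter, mul_sum, ← sum_add_distrib, ← sum_add_distrib]
  refine sum_le_sum fun e he => ?_
  induction e with
  | _ a b =>
    have hab := (SimpleGraph.mem_edgeFinset.mp he).ne
    have not_mem_T : ∀ v ∈ S, v ∉ T := fun _ hv => disjoint_left.mp hST hv
    rw [card_filter_mem_mk hab, card_filter_mem_mk hab]
    by_cases haS : a ∈ S <;> by_cases hbS : b ∈ S <;> by_cases haT : a ∈ T <;>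
      by_cases hbT : b ∈ T <;> simp_all

theorem cutEdges_compl (U : Finset V) : cutEdges G Uᶜ = cutEdges G U := by
  simp only [cutEdges, mem_compl, not_not, and_comm]

theorem escapingEdges_compl_right (S : Finset V) : escapingEdges G S Sᶜ = internalEdges G S := by
  ext e
  induction e with
  | _ a b =>
    simp only [escapingEdges, internalEdges, mem_compl, not_not, mem_filter,
      SimpleGraph.mem_edgeFinset, Sym2.mem_iff]
    grind

theorem two_mul_card_internalEdges_top (U : Finset V) :
    2 * #(internalEdges (⊤ : SimpleGraph V) U) = #U * (#U - 1) := by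
  have : internalEdges ⊤ U = U.offDiag.image Sym2.mk.uncurry := by
    ext e
    induction e with
    | _ a b =>
      simp only [internalEdges, mem_filter, SimpleGraph.mem_edgeFinset, SimpleGraph.mem_edgeSet,
        SimpleGraph.top_adj, Sym2.mem_iff, mem_image, mem_offDiag, Prod.exists,
        Function.uncurry_apply_pair, Sym2.eq_iff]
      constructor
      · rintro ⟨hab, hU⟩
        exact ⟨a, b, ⟨hU a (.inl rfl), hU b (.inr rfl), hab⟩, .inl ⟨rfl, rfl⟩⟩
      · rintro ⟨x, y, ⟨hx, hy, hxy⟩, ⟨rfl, rfl⟩ | ⟨rfl, rfl⟩⟩ <;> simp [hx, hy, hxy, hxy.symm]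
  rw [this, Sym2.two_mul_card_image_offDiag, offDiag_card, Nat.mul_sub_one]

theorem two_mul_card_internalEdges_le (U : Finset V) :
    2 * #(internalEdges G U) ≤ #U * (#U - 1) := by
  rw [← two_mul_card_internalEdges_top]
  exact Nat.mul_le_mul_left 2 <| card_le_card <| filter_subset_filter _ <|
    SimpleGraph.edgeFinset_mono le_top

variable {G}

theorem card_escapingEdges_le_of_hom {W : Type*} [Fintype W] [DecidableEq W] {H : SimpleGraph W}
    [DecidableRel H.Adj] {f : G →g H} (hf : Function.Injective f) {S T : Finset V}
    {S' T' : Finset W} (hS : ∀ v ∈ S, f v ∈ S') (hT : ∀ v, f v ∈ T' → v ∈ T) :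
    #(escapingEdges G S T) ≤ #(escapingEdges H S' T') := by
  refine card_le_card_of_injOn (Sym2.map f) (fun e he => ?_) (Sym2.map.injective hf).injOn
  induction e with
  | _ a b =>
    simp only [escapingEdges, coe_filter, SimpleGraph.mem_edgeFinset, Set.mem_ofPred_eq,
      SimpleGraph.mem_edgeSet, Sym2.map_mk, Sym2.mem_iff, exists_eq_or_imp, exists_eq_left,
      forall_eq_or_imp, forall_eq] at he ⊢
    exact ⟨f.map_adj he.1, he.2.1.imp (hS a) (hS b), mt (hT a) he.2.2.1, mt (hT b) he.2.2.2⟩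

theorem le_card_cutEdges_of_card_le {k : ℕ} (hG : G.IsRegularOfDegree k) {U : Finset V}
    (hU : U.Nonempty) (hUk : #U ≤ k) : k ≤ #(cutEdges G U) := by
  have hsum := sum_degree_eq_two_mul_card_internalEdges_add_card_cutEdges G U
  have hint := two_mul_card_internalEdges_le G U
  simp only [hG.degree_eq, sum_const, smul_eq_mul] at hsum
  obtain ⟨s, hs⟩ := Nat.exists_eq_add_one.mpr hU.card_pos
  obtain ⟨t, rfl⟩ := Nat.exists_eq_add_of_le hUk
  rw [hs, Nat.add_sub_cancel] at hint
  rw [hs] at hsum ⊢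
  -- Each of the `s + 1` vertices of `U` sends at least `t + 1` edges out of `U`.
  calc s + 1 + t ≤ (s + 1) * (t + 1) := by linarith [Nat.zero_le (s * t)]
    _ ≤ #(cutEdges G U) := by linarith

theorem le_card_cutEdges {k : ℕ} (hG : G.IsRegularOfDegree k) (hV : Fintype.card V ≤ 2 * k + 1)
    {U : Finset V} (hU : U.Nonempty) (hUc : Uᶜ.Nonempty) : k ≤ #(cutEdges G U) := by
  obtain hUk | hUk := le_or_gt #U k
  · exact le_card_cutEdges_of_card_le hG hU hUk
  · rw [← cutEdges_compl]
    exact le_card_cutEdges_of_card_le hG hUc (by grind [card_add_card_compl U])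

theorem le_card_escapingEdges_of_union_ne_univ {k : ℕ} (hG : G.IsRegularOfDegree k)
    (hV : Fintype.card V ≤ 2 * k + 1) {S T : Finset V} (hST : Disjoint S T) (hlt : #T < #S)
    (hne : S ∪ T ≠ univ) : k ≤ #(escapingEdges G S T) := by
  have hcut : k ≤ #(cutEdges G (S ∪ T)) :=
    le_card_cutEdges hG hV ((card_pos.mp (by omega)).mono subset_union_left)
      (nonempty_iff_ne_empty.mpr (mt (compl_eq_empty_iff _).mp hne))
  have hsum := sum_degree_add_card_cutEdges_le G hST
  simp only [hG.degree_eq, sum_const, smul_eq_mul] at hsum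
  have : (#T + 1) * k ≤ #S * k := Nat.mul_le_mul_right k hlt
  linarith

/-- A `k`-regular graph in which, as soon as `T` is smaller than `S`, at least `k` edges leave `S`
without ending in `T`. By Hall's theorem, the second condition ensures that deleting fewer than `k`
edges preserves the existence of a fractional perfect matching. -/
structure IsRobustRegular (G : SimpleGraph V) [DecidableRel G.Adj] (k : ℕ) : Prop where
  isRegularOfDegree : G.IsRegularOfDegree k
  le_card_escapingEdges : ∀ S T : Finset V, Disjoint S T → #T < #S → k ≤ #(escapingEdges G S T)

theorem isRobustRegular_of_forall_le_card_internalEdges {k : ℕ} (hG : G.IsRegularOfDegree k)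
    (hV : Fintype.card V ≤ 2 * k + 1)
    (h : ∀ S : Finset V, #Sᶜ < #S → k ≤ #(internalEdges G S)) : IsRobustRegular G k := by
  refine ⟨hG, fun S T hST hlt => ?_⟩
  by_cases huniv : S ∪ T = univ
  · obtain rfl : Sᶜ = T := IsCompl.compl_eq ⟨hST, codisjoint_iff.mpr huniv⟩
    rw [escapingEdges_compl_right]
    exact h S hlt
  · exact le_card_escapingEdges_of_union_ne_univ hG hV hST hlt huniv

theorem isRobustRegular_of_even_card {k : ℕ} (hG : G.IsRegularOfDegree k)
    (hV : Fintype.card V ≤ 2 * k + 1) (heven : Even (Fintype.card V)) : IsRobustRegular G k := by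
  refine isRobustRegular_of_forall_le_card_internalEdges hG hV fun S hlt => ?_
  have hS := sum_degree_eq_two_mul_card_internalEdges_add_card_cutEdges G S
  have hSc := sum_degree_eq_two_mul_card_internalEdges_add_card_cutEdges G Sᶜ
  rw [cutEdges_compl] at hSc
  simp only [hG.degree_eq, sum_const, smul_eq_mul] at hS hSc
  have hgap : #Sᶜ + 2 ≤ #S := by
    rw [← card_add_card_compl S] at heven
    grind
  have : (#Sᶜ + 2) * k ≤ #S * k := Nat.mul_le_mul_right k hgap
  linarith

end EdgeCounts

section Fmp

variable [Fintype V] [DecidableEq V] {G : SimpleGraph V}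

theorem not_hasFPM_deleteEdges_incidenceFinset [DecidableRel G.Adj] (v : V) :
    ¬ (G.deleteEdges (G.incidenceFinset v : Set (Sym2 V))).HasFPM := by
  rintro ⟨f, -, f_eq_zero, sum_f⟩
  refine zero_ne_one ((sum_eq_zero fun e he => f_eq_zero e fun hmem => ?_).symm.trans (sum_f v))
  rw [SimpleGraph.edgeSet_deleteEdges, SimpleGraph.coe_incidenceFinset] at hmem
  exact hmem.2 ⟨hmem.1, (mem_filter.mp he).2⟩

variable (G) in
theorem fmp_le_degree [DecidableRel G.Adj] (v : V) : G.fmp ≤ G.degree v :=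
  Nat.sInf_le ⟨G.incidenceFinset v, by simpa using G.incidenceSet_subset v,
    G.card_incidenceFinset_eq_degree v, not_hasFPM_deleteEdges_incidenceFinset v⟩

theorem le_fmp [Nonempty V] {k : ℕ}
    (h : ∀ F : Finset (Sym2 V), #F < k → (G.deleteEdges (F : Set (Sym2 V))).HasFPM) :
    k ≤ G.fmp := by
  classical
  obtain ⟨v⟩ := ‹Nonempty V›
  refine le_csInf ⟨G.degree v, G.incidenceFinset v, by simpa using G.incidenceSet_subset v,
    G.card_incidenceFinset_eq_degree v, not_hasFPM_deleteEdges_incidenceFinset v⟩ ?_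
  rintro _ ⟨F, -, rfl, hF⟩
  exact not_lt.mp (mt (h F) hF)

variable (G) in
theorem card_mul_fmp_le_two_mul_ncard_edgeSet :
    Fintype.card V * G.fmp ≤ 2 * G.edgeSet.ncard := by
  classical
  rw [← SimpleGraph.coe_edgeFinset, Set.ncard_coe_finset, ← G.sum_degrees_eq_twice_card_edges,
    ← card_univ, ← smul_eq_mul]
  exact card_nsmul_le_sum _ _ _ fun v _ => fmp_le_degree G v

namespace IsRobustRegular

variable [DecidableRel G.Adj] {k : ℕ}

theorem two_mul_ncard_edgeSet (hG : IsRobustRegular G k) :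
    2 * G.edgeSet.ncard = Fintype.card V * k := by
  rw [← SimpleGraph.coe_edgeFinset, Set.ncard_coe_finset, ← G.sum_degrees_eq_twice_card_edges]
  simp [hG.isRegularOfDegree.degree_eq]

theorem hasFPM_deleteEdges (hG : IsRobustRegular G k) {F : Finset (Sym2 V)} (hF : #F < k) :
    (G.deleteEdges (F : Set (Sym2 V))).HasFPM := by
  refine hasFPM_of_forall_exists_adj fun S T hST hlt => ?_
  obtain ⟨e, he, heF⟩ :=
    exists_mem_notMem_of_card_lt_card (hF.trans_le (hG.le_card_escapingEdges S T hST hlt))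
  simp only [escapingEdges, mem_filter, SimpleGraph.mem_edgeFinset] at he
  obtain ⟨hedge, ⟨u, hue, hu⟩, hT⟩ := he
  obtain ⟨v, rfl⟩ := hue
  exact ⟨u, hu, v, hT v (Sym2.mem_mk_right u v), by simpa using ⟨hedge, heF⟩⟩

theorem fmp_eq [Nonempty V] (hG : IsRobustRegular G k) : G.fmp = k := by
  obtain ⟨v⟩ := ‹Nonempty V›
  exact le_antisymm ((fmp_le_degree G v).trans_eq (hG.isRegularOfDegree.degree_eq v))
    (le_fmp fun F hF => hG.hasFPM_deleteEdges hF)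

variable {W : Type*} [Fintype W] [DecidableEq W] {H : SimpleGraph W} [DecidableRel H.Adj]

theorem of_iso (hG : IsRobustRegular G k) (e : G ≃g H) : IsRobustRegular H k where
  isRegularOfDegree w := by rw [← e.symm.degree_eq, hG.isRegularOfDegree.degree_eq]
  le_card_escapingEdges S T hST hlt := by
    refine (hG.le_card_escapingEdges (S.map e.symm.toEquiv.toEmbedding)
      (T.map e.symm.toEquiv.toEmbedding) ((disjoint_map _).mpr hST) (by simpa using hlt)).trans ?_
    exact card_escapingEdges_le_of_hom (f := e.toHom) e.injective
      (fun v hv => by obtain ⟨w, hw, rfl⟩ := mem_map.mp hv; simpa using hw)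
      (fun v hv => mem_map.mpr ⟨e v, hv, e.symm_apply_apply v⟩)

theorem sum [DecidableRel (G ⊕g H).Adj] (hG : IsRobustRegular G k) (hH : IsRobustRegular H k) :
    IsRobustRegular (G ⊕g H) k where
  isRegularOfDegree := by
    rintro (v | w)
    · rw [degree_eq_ncard_neighborSet, SimpleGraph.neighborSet_sum_inl,
        Set.ncard_image_of_injective _ Sum.inl_injective, ← degree_eq_ncard_neighborSet,
        hG.isRegularOfDegree.degree_eq]
    · rw [degree_eq_ncard_neighborSet, SimpleGraph.neighborSet_sum_inr,
        Set.ncard_image_of_injective _ Sum.inr_injective, ← degree_eq_ncard_neighborSet,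
        hH.isRegularOfDegree.degree_eq]
  le_card_escapingEdges S T hST hlt := by
    have hleft : Disjoint S.toLeft T.toLeft := by simp_all [disjoint_left]
    have hright : Disjoint S.toRight T.toRight := by simp_all [disjoint_left]
    obtain hlt' | hlt' : #T.toLeft < #S.toLeft ∨ #T.toRight < #S.toRight := by
      rw [← card_toLeft_add_card_toRight (u := S), ← card_toLeft_add_card_toRight (u := T)] at hlt
      omega
    · exact (hG.le_card_escapingEdges _ _ hleft hlt').trans <|
        card_escapingEdges_le_of_hom (f := SimpleGraph.Embedding.sumInl.toHom) Sum.inl_injective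
          (fun _ => mem_toLeft.mp) (fun _ => mem_toLeft.mpr)
    · exact (hH.le_card_escapingEdges _ _ hright hlt').trans <|
        card_escapingEdges_le_of_hom (f := SimpleGraph.Embedding.sumInr.toHom) Sum.inr_injective
          (fun _ => mem_toRight.mp) (fun _ => mem_toRight.mpr)

end IsRobustRegular

end Fmp

theorem isRobustRegular_top [Fintype V] [DecidableEq V] {k : ℕ} (hV : Fintype.card V = k + 1)
    (hk : 6 ≤ k) : IsRobustRegular (⊤ : SimpleGraph V) k := by
  have hreg : (⊤ : SimpleGraph V).IsRegularOfDegree k := by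
    simpa [hV] using SimpleGraph.IsRegularOfDegree.top (V := V)
  refine isRobustRegular_of_forall_le_card_internalEdges hreg (by omega) fun S hlt => ?_
  have hint := two_mul_card_internalEdges_top S
  have hcard := card_add_card_compl S
  obtain ⟨s, hs⟩ : ∃ s, #S = s + 1 := ⟨#S - 1, by omega⟩
  have hks : k ≤ 2 * s := by omega
  have : 3 ≤ s := by omega
  rw [hs, Nat.add_sub_cancel] at hint
  nlinarith

theorem isRegularOfDegree_mulCayley {M : Type*} [Group M] [Fintype M] [DecidableEq M]
    {s : Finset M} (h_inv : ∀ g ∈ s, g⁻¹ ∈ s) (h_one : 1 ∉ s) :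
    (SimpleGraph.mulCayley (s : Set M)).IsRegularOfDegree #s := by
  intro u
  rw [← SimpleGraph.card_neighborFinset_eq_degree, ← card_map (s := s) (mulLeftEmbedding u)]
  congr 1
  ext v
  simp only [SimpleGraph.mem_neighborFinset, SimpleGraph.mulCayley_adj, mem_coe, mem_map,
    mulLeftEmbedding_apply]
  constructor
  · rintro ⟨-, h | h⟩
    · exact ⟨u⁻¹ * v, h, mul_inv_cancel_left u v⟩
    · exact ⟨u⁻¹ * v, by simpa using h_inv _ h, mul_inv_cancel_left u v⟩
  · rintro ⟨g, hg, rfl⟩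
    exact ⟨fun h => h_one (left_eq_mul.mp h ▸ hg), .inl (by simpa using hg)⟩

theorem exists_isRegularOfDegree_dihedralGroup {h d : ℕ} [NeZero h] (hd : d ≤ h) :
    ∃ (G : SimpleGraph (DihedralGroup h)) (_ : DecidableRel G.Adj), G.IsRegularOfDegree d := by
  obtain ⟨D, -, rfl⟩ : ∃ D ⊆ (univ : Finset (ZMod h)), #D = d :=
    exists_subset_card_eq (by simpa using hd)
  have sr_injective : Function.Injective (DihedralGroup.sr (n := h)) := fun i j => by simp
  let reflections : Finset (DihedralGroup h) := D.map ⟨DihedralGroup.sr, sr_injective⟩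
  refine ⟨SimpleGraph.mulCayley (reflections : Set (DihedralGroup h)), inferInstance, ?_⟩
  rw [← card_map ⟨DihedralGroup.sr, sr_injective⟩]
  exact isRegularOfDegree_mulCayley (s := reflections) (by simp [reflections])
    (by simp [reflections, DihedralGroup.one_def, -DihedralGroup.r_zero])

/-- `n` is the order of some robust `k`-regular graph. -/
def IsRobustRegularOrder (k n : ℕ) : Prop :=
  ∃ (G : SimpleGraph (Fin n)) (_ : DecidableRel G.Adj), IsRobustRegular G k

theorem IsRobustRegular.isRobustRegularOrder [Fintype V] [DecidableEq V] {G : SimpleGraph V}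
    [DecidableRel G.Adj] {k n : ℕ} (hG : IsRobustRegular G k) (hV : Fintype.card V = n) :
    IsRobustRegularOrder k n := by
  classical
  exact ⟨G.overFin hV, inferInstance, hG.of_iso (G.overFinIso hV)⟩

namespace IsRobustRegularOrder

variable {k m n : ℕ}

theorem add (hm : IsRobustRegularOrder k m) (hn : IsRobustRegularOrder k n) :
    IsRobustRegularOrder k (m + n) := by
  classical
  obtain ⟨G, _, hG⟩ := hm
  obtain ⟨H, _, hH⟩ := hn
  exact (hG.sum hH).isRobustRegularOrder (by simp)

theorem mul_add (hm : IsRobustRegularOrder k m) (hn : IsRobustRegularOrder k n) (l : ℕ) :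
    IsRobustRegularOrder k (l * m + n) := by
  induction l with
  | zero => simpa using hn
  | succ l ih =>
    rw [Nat.succ_mul, add_right_comm]
    exact ih.add hm

theorem succ (hk : 6 ≤ k) : IsRobustRegularOrder k (k + 1) :=
  (isRobustRegular_top (Fintype.card_fin _) hk).isRobustRegularOrder (Fintype.card_fin _)

theorem two_mul {h : ℕ} (hhk : h ≤ k) (hkh : k < 2 * h) : IsRobustRegularOrder k (2 * h) := by
  have : NeZero h := ⟨by omega⟩
  obtain ⟨G, _, hG⟩ := exists_isRegularOfDegree_dihedralGroup (h := h) (d := 2 * h - 1 - k)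
    (by omega)
  have hcompl : Gᶜ.IsRegularOfDegree k := by
    convert hG.compl using 1
    rw [DihedralGroup.card]
    omega
  exact (isRobustRegular_of_even_card hcompl (by rw [DihedralGroup.card]; omega)
    (by rw [DihedralGroup.card]; exact even_two_mul h)).isRobustRegularOrder DihedralGroup.card

end IsRobustRegularOrder

theorem isRobustRegularOrder_of_cases {n k l r : ℕ} (hk : 6 ≤ k) (hkn : k < n)
    (hdecomp : n = l * (k + 1) + r) (hr : r ≤ k)
    (hcase : r = 0 ∨ Odd (k + r) ∨ (1 ≤ r ∧ Even (k + r) ∧ Even k ∧ 2 ≤ l)) :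
    IsRobustRegularOrder k n := by
  have h_complete := IsRobustRegularOrder.succ hk
  have hl : 1 ≤ l := Nat.one_le_iff_ne_zero.mpr (by rintro rfl; omega)
  subst hdecomp
  obtain ⟨l, rfl⟩ := Nat.exists_eq_add_of_le' hl
  rcases hcase with rfl | ⟨q, hq⟩ | ⟨hr1, ⟨q, hq⟩, ⟨p, hp⟩, hl2⟩
  · rw [Nat.add_zero, Nat.succ_mul]
    exact h_complete.mul_add h_complete l
  · have h_block : IsRobustRegularOrder k (2 * (q + 1)) := .two_mul (by omega) (by omega)
    convert h_complete.mul_add h_block l using 1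
    rw [Nat.succ_mul]
    omega
  · obtain ⟨l, rfl⟩ := Nat.exists_eq_add_of_le' (Nat.le_of_succ_le_succ hl2)
    have h_block : IsRobustRegularOrder k (2 * (p + 1)) := .two_mul (by omega) (by omega)
    have h_block' : IsRobustRegularOrder k (2 * q) := .two_mul (by omega) (by omega)
    convert h_complete.mul_add (h_block.add h_block') l using 1
    rw [Nat.succ_mul, Nat.succ_mul]
    omega

theorem s_nk_case1 (n k l r : ℕ) (hn : 1 ≤ n) (hk6 : 6 ≤ k) (hkn : k ≤ n - 1)
    (hdecomp : n = l * (k + 1) + r) (hr : r ≤ k)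
    (hcase : r = 0 ∨ (1 ≤ r ∧ Odd (k + r)) ∨
      (1 ≤ r ∧ Even (k + r) ∧ Even k ∧ 2 ≤ l)) :
    ∃ m : ℕ, 2 * m = n * k ∧
      IsLeast {m : ℕ | ∃ G : SimpleGraph (Fin n), G.fmp = k ∧ G.edgeSet.ncard = m} m := by
  classical
  have : NeZero n := ⟨by omega⟩
  obtain ⟨G, _, hG⟩ := isRobustRegularOrder_of_cases hk6 (by omega) hdecomp hr
    (hcase.imp_right (Or.imp_left And.right))
  have hedges : 2 * G.edgeSet.ncard = n * k := by simpa using hG.two_mul_ncard_edgeSet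
  refine ⟨G.edgeSet.ncard, hedges, ⟨G, hG.fmp_eq, rfl⟩, ?_⟩
  rintro _ ⟨H, rfl, rfl⟩
  have := card_mul_fmp_le_two_mul_ncard_edgeSet H
  rw [Fintype.card_fin] at this
  omega
end

section
/- Let n and k be positive integers with 6 ≤ k ≤ n − 2, and write n = ℓ·(k+1) + r with 0 ≤ r ≤ k. If r ≥ 1, k + r is even, and ℓ = 1, then ⌈nk/2⌉ ≤ s(n,k) ≤ (n−1)(k+2)/2. -/
open Finset

variable {V : Type*}

/- By Hall's theorem, if `G - F` has no permutation moving every vertex to a neighbour, then some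
`A` has fewer than `#A` neighbours in `G - F`. Such an `A` may be taken independent, and then
shrunk to size `a ≤ (n + 1) / 2`. As each of its vertices keeps at most `a - 1` neighbours, minimum
degree `d` of `G` forces `a * (d - (a - 1))` incidences to be lost, so `F` has to be large. If there
is such a permutation `σ`, giving every edge `s(v, σ v)` weight `1 / 2`, counted twice on the
2-cycles of `σ`, is a fractional perfect matching.

With `n = k + 1 + r` odd, a graph with `fmp ≥ k` and few edges is, for `r ≤ k - 2`, a Cayley sum
graph of degrees `k + 1` and `k + 2`, and, for `r = k`, two copies of `K_{k+1}` sharing one vertex.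
In the latter, the shared vertex can join either clique, and a deletion of `k - 1` edges leaves at
least one of the two resulting partitions into cliques intact enough. Deleting part of a minimum
preclusion set lowers `fmp` to exactly `k` without adding edges. -/

namespace FMP

section AdjPerm

/-- `G` has a permutation of its vertices moving each vertex to a neighbour, i.e. its vertex set is
partitioned into edges (the 2-cycles) and cycles of `G`. This is the combinatorial form in which
fractional perfect matchings are produced. -/
def HasAdjPerm (G : SimpleGraph V) : Prop :=
  ∃ σ : Equiv.Perm V, ∀ v, G.Adj v (σ v)

variable {G H : SimpleGraph V}

lemma HasAdjPerm.mono (hGH : G ≤ H) : HasAdjPerm G → HasAdjPerm H :=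
  fun ⟨σ, hσ⟩ => ⟨σ, fun v => hGH (hσ v)⟩

lemma HasAdjPerm.of_induce_compl (s : Set V) (hs : HasAdjPerm (G.induce s))
    (hsc : HasAdjPerm (G.induce sᶜ)) : HasAdjPerm G := by
  classical
  obtain ⟨σ, hσ⟩ := hs
  obtain ⟨τ, hτ⟩ := hsc
  refine ⟨Equiv.Perm.subtypeCongr (p := (· ∈ s)) σ τ, fun v => ?_⟩
  by_cases hv : v ∈ s
  · rw [Equiv.Perm.subtypeCongr.left_apply _ _ hv]
    exact hσ ⟨v, hv⟩
  · rw [Equiv.Perm.subtypeCongr.right_apply _ _ hv]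
    exact hτ ⟨v, hv⟩

variable [Fintype V] [DecidableEq V]

/-- The edge weight putting `1 / 2` on `s(v, σ v)` for each vertex `v`, so that the edges given by
2-cycles of `σ` get weight 1. It turns a permutation as in `HasAdjPerm` into a fractional perfect
matching. -/
noncomputable def permWeight (σ : Equiv.Perm V) (e : Sym2 V) : ℝ :=
  ∑ v, if e = s(v, σ v) then 1 / 2 else 0

lemma permWeight_nonneg (σ : Equiv.Perm V) (e : Sym2 V) : 0 ≤ permWeight σ e :=
  sum_nonneg fun v _ => by split_ifs <;> norm_num

lemma sum_permWeight_eq_one {σ : Equiv.Perm V} (hσ : ∀ v, v ≠ σ v) (u : V) :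
    ∑ e with u ∈ e, permWeight σ e = 1 := by
  have hincident (v : V) : ∑ e with u ∈ e, (if e = s(v, σ v) then (1 / 2 : ℝ) else 0) =
      (if v = u then 1 / 2 else 0) + (if σ v = u then 1 / 2 else 0) := by
    have := hσ v
    simp only [sum_ite_eq', mem_filter_univ, Sym2.mem_iff]
    grind
  calc ∑ e with u ∈ e, permWeight σ e
      = ∑ v, ((if v = u then 1 / 2 else 0) + (if σ v = u then 1 / 2 else 0)) := by
        simp only [permWeight]
        rw [sum_comm]
        exact sum_congr rfl fun v _ => hincident v
    _ = 1 := by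
        rw [sum_add_distrib, Equiv.sum_comp σ fun w => if w = u then (1 / 2 : ℝ) else 0]
        simp only [sum_ite_eq', mem_univ, if_true]
        norm_num

lemma HasAdjPerm.hasFPM (hG : HasAdjPerm G) : G.HasFPM := by
  obtain ⟨σ, hσ⟩ := hG
  have hsum := sum_permWeight_eq_one fun v => (hσ v).ne
  refine ⟨permWeight σ, fun e => ⟨permWeight_nonneg σ e, ?_⟩,
    fun e he => sum_eq_zero fun v _ => if_neg ?_, hsum⟩
  · induction e with | _ x y =>
    rw [← hsum x]
    exact single_le_sum (fun e _ => permWeight_nonneg σ e) (by simp)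
  · rintro rfl
    exact he (hσ v)

lemma not_hasFPM_of_isolated {v : V} (hv : ∀ w, ¬ G.Adj v w) : ¬ G.HasFPM := by
  rintro ⟨f, -, hf_zero, hf_sum⟩
  refine zero_ne_one ((sum_eq_zero fun e he => hf_zero e fun heG => ?_).symm.trans (hf_sum v))
  obtain ⟨w, rfl⟩ := (mem_filter.1 he).2
  exact hv w heG

end AdjPerm

section Hall

variable [Fintype V] [DecidableEq V] {G : SimpleGraph V} [DecidableRel G.Adj]

/-- The neighbourhood of a set `A` of vertices, to which Hall's condition refers. It may
meet `A`. -/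
def neighborhood (G : SimpleGraph V) [DecidableRel G.Adj] (A : Finset V) : Finset V :=
  A.biUnion fun v => G.neighborFinset v

lemma mem_neighborhood {A : Finset V} {w : V} : w ∈ neighborhood G A ↔ ∃ v ∈ A, G.Adj v w := by
  simp only [neighborhood, mem_biUnion, SimpleGraph.mem_neighborFinset]

lemma exists_independent_of_card_neighborhood_lt {A : Finset V}
    (hA : #(neighborhood G A) < #A) :
    ∃ I : Finset V, Disjoint I (neighborhood G I) ∧ #(neighborhood G I) < #I := by
  set N := neighborhood G A with hN
  have hsub : neighborhood G (A \ N) ⊆ N \ A := by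
    intro w hw
    simp only [hN, mem_sdiff, mem_neighborhood] at hw ⊢
    obtain ⟨v, ⟨hvA, hvN⟩, hvw⟩ := hw
    exact ⟨⟨v, hvA, hvw⟩, fun hwA => hvN ⟨w, hwA, hvw.symm⟩⟩
  refine ⟨A \ N, disjoint_of_subset_right hsub disjoint_sdiff_sdiff, ?_⟩
  exact (card_le_card hsub).trans_lt (card_sdiff_lt_card_sdiff_iff.2 hA)

lemma hasAdjPerm_of_forall_card_le
    (hG : ∀ A : Finset V, 2 * #A ≤ Fintype.card V + 1 → #A ≤ #(neighborhood G A)) :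
    HasAdjPerm G := by
  have hall (A : Finset V) : #A ≤ #(neighborhood G A) := by
    by_contra! hA
    obtain ⟨I, hdisj, hI⟩ := exists_independent_of_card_neighborhood_lt hA
    obtain ⟨B, hBI, hB⟩ := exists_subset_card_eq (min_le_left #I ((Fintype.card V + 1) / 2))
    have hNB : #(neighborhood G B) ≤ #(neighborhood G I) :=
      card_le_card (biUnion_subset_biUnion_of_subset_left _ hBI)
    have hsum : #I + #(neighborhood G I) ≤ Fintype.card V := by
      rw [← card_union_of_disjoint hdisj]
      exact card_le_univ _
    have := hG B (by omega)
    omega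
  obtain ⟨σ, hinj, hσ⟩ := (all_card_le_biUnion_card_iff_exists_injective _).1 hall
  exact ⟨Equiv.ofBijective σ (Finite.injective_iff_bijective.1 hinj),
    fun v => (G.mem_neighborFinset v _).1 (hσ v)⟩

end Hall

section EdgeDeletion

variable [DecidableEq V]

lemma card_filter_mem_sym2_le (A : Finset V) (e : Sym2 V) :
    #{v ∈ A | v ∈ e} ≤ 1 + if e ∈ A.offDiag.image Sym2.mk.uncurry then 1 else 0 := by
  split_ifs with he
  · calc #{v ∈ A | v ∈ e} ≤ #e.toFinset :=
          card_le_card fun v hv => Sym2.mem_toFinset.2 (mem_filter.1 hv).2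
      _ ≤ 2 := by rw [Sym2.card_toFinset]; split_ifs <;> norm_num
  · refine card_le_one.2 fun x hx y hy => by_contra fun hxy => he ?_
    rw [mem_filter] at hx hy
    exact mem_image.2 ⟨(x, y), mem_offDiag.2 ⟨hx.1, hy.1, hxy⟩,
      ((Sym2.mem_and_mem_iff hxy).1 ⟨hx.2, hy.2⟩).symm⟩

lemma sum_card_filter_mem_sym2_le (A : Finset V) (F : Finset (Sym2 V)) :
    ∑ v ∈ A, #{e ∈ F | v ∈ e} ≤ #F + min #F ((#A).choose 2) := by
  calc ∑ v ∈ A, #{e ∈ F | v ∈ e} = ∑ e ∈ F, #{v ∈ A | v ∈ e} :=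
        sum_card_bipartiteAbove_eq_sum_card_bipartiteBelow (· ∈ ·)
    _ ≤ ∑ e ∈ F, (1 + if e ∈ A.offDiag.image Sym2.mk.uncurry then 1 else 0) :=
        sum_le_sum fun e _ => card_filter_mem_sym2_le A e
    _ = #F + #{e ∈ F | e ∈ A.offDiag.image Sym2.mk.uncurry} := by
        rw [sum_add_distrib, ← card_eq_sum_ones, ← card_filter]
    _ ≤ #F + min #F ((#A).choose 2) := by
        gcongr
        refine le_min (card_filter_le _ _) ?_
        rw [← Sym2.card_image_offDiag]
        exact card_le_card fun e he => (mem_filter.1 he).2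

variable [Fintype V] {G : SimpleGraph V} [DecidableRel G.Adj] {F : Finset (Sym2 V)}

lemma degree_le_degree_deleteEdges_add [DecidableRel (G.deleteEdges ↑F).Adj] (v : V) :
    G.degree v ≤ (G.deleteEdges ↑F).degree v + #{e ∈ F | v ∈ e} := by
  simp only [← SimpleGraph.card_incidenceFinset_eq_degree]
  refine (card_le_card fun e he => ?_).trans (card_union_le _ _)
  simp only [mem_union, mem_filter, SimpleGraph.mem_incidenceFinset,
    SimpleGraph.incidenceSet, SimpleGraph.edgeSet_deleteEdges, Set.mem_ofPred_eq,
    Set.mem_sdiff, mem_coe] at he ⊢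
  tauto

lemma card_mul_le_of_card_neighborhood_lt [DecidableRel (G.deleteEdges ↑F).Adj] {d : ℕ}
    (hd : ∀ v, d ≤ G.degree v) {A : Finset V} (hA : #(neighborhood (G.deleteEdges ↑F) A) < #A) :
    #A * d ≤ #F + min #F ((#A).choose 2) + #A * (#A - 1) := by
  have hsurviving : ∀ v ∈ A, (G.deleteEdges ↑F).degree v ≤ #A - 1 := fun v hv =>
    (card_le_card fun w hw => mem_neighborhood.2
      ⟨v, hv, ((G.deleteEdges ↑F).mem_neighborFinset v w).1 hw⟩).trans (Nat.le_sub_one_of_lt hA)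
  calc #A * d ≤ ∑ v ∈ A, G.degree v := card_nsmul_le_sum _ _ _ fun v _ => hd v
    _ ≤ ∑ v ∈ A, (#{e ∈ F | v ∈ e} + (#A - 1)) := sum_le_sum fun v hv => by
        have := degree_le_degree_deleteEdges_add (G := G) (F := F) v
        have := hsurviving v hv
        omega
    _ ≤ #F + min #F ((#A).choose 2) + #A * (#A - 1) := by
        rw [sum_add_distrib, sum_const, smul_eq_mul]
        gcongr
        exact sum_card_filter_mem_sym2_le A F

omit [DecidableEq V] in
lemma hasAdjPerm_deleteEdges {d : ℕ} (hd : ∀ v, d ≤ G.degree v)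
    (hF : ∀ a, 1 ≤ a → 2 * a ≤ Fintype.card V + 1 →
      #F + min #F (a.choose 2) + a * (a - 1) < a * d) :
    HasAdjPerm (G.deleteEdges ↑F) := by
  classical
  refine hasAdjPerm_of_forall_card_le fun A hA => ?_
  by_contra! hlt
  exact (hF #A (Nat.one_le_of_lt hlt) hA).not_ge
    (card_mul_le_of_card_neighborhood_lt hd hlt)

end EdgeDeletion

section Clique

/- Order 5 has to be excluded: deleting a triangle from `K_5` leaves three independent vertices with
only two neighbours. -/
lemma hasAdjPerm_top_deleteEdges [Fintype V] {F : Finset (Sym2 V)} (hV : 6 ≤ Fintype.card V)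
    (hF : #F + 2 ≤ Fintype.card V) : HasAdjPerm ((⊤ : SimpleGraph V).deleteEdges ↑F) := by
  classical
  refine hasAdjPerm_deleteEdges (d := Fintype.card V - 1)
    (fun v => (SimpleGraph.complete_graph_degree v).ge) fun a ha hcard => ?_
  obtain ⟨m, hm⟩ : ∃ m, Fintype.card V = m + 1 := ⟨Fintype.card V - 1, by omega⟩
  rw [hm] at hV hF hcard ⊢
  obtain rfl | rfl | ha3 : a = 1 ∨ a = 2 ∨ 3 ≤ a := by omega
  · simp only [Nat.choose_succ_self, zero_le, inf_of_le_right, add_zero, tsub_self, mul_zero,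
      add_tsub_cancel_right, one_mul]
    omega
  · simp only [Nat.choose_self, Nat.add_one_sub_one, mul_one, add_tsub_cancel_right]
    omega
  · have hmin := min_le_left #F (a.choose 2)
    obtain ⟨b, rfl⟩ := Nat.exists_eq_add_of_le ha3
    have hb : b + 5 ≤ m := by omega
    simp only [Nat.add_sub_cancel, show 3 + b - 1 = b + 2 by omega]
    nlinarith

variable [DecidableEq V] {G : SimpleGraph V} {F : Finset (Sym2 V)} {C : Finset V}

lemma hasAdjPerm_induce_deleteEdges_of_isClique (hC : G.IsClique C) (hcard : 6 ≤ #C)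
    (hF : #(F ∩ C.sym2) + 2 ≤ #C) :
    HasAdjPerm ((G.deleteEdges ↑F).induce (C : Set V)) := by
  let ι : Sym2 C → Sym2 V := Sym2.map Subtype.val
  have hι : Function.Injective ι := Sym2.map.injective Subtype.val_injective
  have hpre : #(F.preimage ι hι.injOn) ≤ #(F ∩ C.sym2) := by
    refine card_le_card_of_injOn ι (fun e he => ?_) hι.injOn
    refine mem_inter.2 ⟨mem_preimage.1 he, mem_sym2_iff.2 fun v hv => ?_⟩
    obtain ⟨w, -, rfl⟩ := Sym2.mem_map.1 hv
    exact w.2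
  refine (hasAdjPerm_top_deleteEdges (F := F.preimage ι hι.injOn) (by simpa) ?_).mono
    fun x y hxy => ?_
  · rw [Fintype.card_coe]
    omega
  · rw [SimpleGraph.deleteEdges_adj, coe_preimage] at hxy
    exact SimpleGraph.deleteEdges_adj.2
      ⟨hC x.2 y.2 fun h => hxy.1 (Subtype.ext h), hxy.2⟩

lemma hasFPM_deleteEdges_of_isClique_of_isClique_compl [Fintype V] (hC : G.IsClique C)
    (hCc : G.IsClique (Cᶜ : Finset V)) (hcard : 6 ≤ #C) (hcardc : 6 ≤ #Cᶜ)
    (hF : #(F ∩ C.sym2) + 2 ≤ #C) (hFc : #(F ∩ Cᶜ.sym2) + 2 ≤ #Cᶜ) :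
    (G.deleteEdges ↑F).HasFPM := by
  refine (HasAdjPerm.of_induce_compl (C : Set V)
    (hasAdjPerm_induce_deleteEdges_of_isClique hC hcard hF) ?_).hasFPM
  rw [← coe_compl]
  exact hasAdjPerm_induce_deleteEdges_of_isClique hCc hcardc hFc

end Clique

section Preclusion

variable [Fintype V] [DecidableEq V] {G : SimpleGraph V} {F : Finset (Sym2 V)} {k : ℕ}

/-- `F` is an FMP set of `G`: a set of edges whose deletion destroys all fractional perfect
matchings. -/
def IsFMPSet (G : SimpleGraph V) (F : Finset (Sym2 V)) : Prop :=
  ↑F ⊆ G.edgeSet ∧ ¬ (G.deleteEdges ↑F).HasFPM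

lemma IsFMPSet.fmp_le (hF : IsFMPSet G F) : G.fmp ≤ #F :=
  Nat.sInf_le ⟨F, hF.1, rfl, hF.2⟩

lemma fmp_le_degree (G : SimpleGraph V) [DecidableRel G.Adj] (v : V) : G.fmp ≤ G.degree v := by
  rw [← G.card_incidenceFinset_eq_degree]
  refine IsFMPSet.fmp_le ⟨?_, not_hasFPM_of_isolated (v := v) fun w hw => ?_⟩
  · rw [SimpleGraph.coe_incidenceFinset]
    exact G.incidenceSet_subset v
  · rw [SimpleGraph.deleteEdges_adj, SimpleGraph.coe_incidenceFinset] at hw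
    exact hw.2 ⟨hw.1, Sym2.mem_mk_left v w⟩

omit [DecidableEq V] in
lemma sum_degree_eq_two_mul_ncard_edgeSet (G : SimpleGraph V) [DecidableRel G.Adj] :
    ∑ v, G.degree v = 2 * G.edgeSet.ncard := by
  rw [G.sum_degrees_eq_twice_card_edges, ← SimpleGraph.coe_edgeFinset, Set.ncard_coe_finset]

lemma card_mul_fmp_le_two_mul_ncard_edgeSet (G : SimpleGraph V) :
    Fintype.card V * G.fmp ≤ 2 * G.edgeSet.ncard := by
  classical
  rw [← sum_degree_eq_two_mul_ncard_edgeSet]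
  exact card_nsmul_le_sum univ _ _ fun v _ => fmp_le_degree G v

variable [Nonempty V]

lemma exists_isFMPSet_card_eq_fmp (G : SimpleGraph V) : ∃ F, IsFMPSet G F ∧ #F = G.fmp := by
  classical
  obtain ⟨v⟩ := ‹Nonempty V›
  have hempty : ¬ (G.deleteEdges ↑G.edgeFinset).HasFPM :=
    not_hasFPM_of_isolated (v := v) fun w => by simp
  obtain ⟨F, hFG, hFcard, hF⟩ := Nat.sInf_mem
    (s := {k | ∃ F : Finset (Sym2 V), ↑F ⊆ G.edgeSet ∧ #F = k ∧ ¬ (G.deleteEdges ↑F).HasFPM})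
    ⟨_, G.edgeFinset, G.coe_edgeFinset.subset, rfl, hempty⟩
  exact ⟨F, ⟨hFG, hF⟩, hFcard⟩

lemma le_fmp (hG : ∀ F : Finset (Sym2 V), #F < k → (G.deleteEdges ↑F).HasFPM) : k ≤ G.fmp := by
  obtain ⟨F, hF, hFcard⟩ := exists_isFMPSet_card_eq_fmp G
  rw [← hFcard]
  exact not_lt.1 fun hlt => hF.2 (hG F hlt)

lemma fmp_le_card_add_fmp_deleteEdges (hF : ↑F ⊆ G.edgeSet) :
    G.fmp ≤ #F + (G.deleteEdges ↑F).fmp := by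
  obtain ⟨F', ⟨hF'G, hF'⟩, hF'card⟩ := exists_isFMPSet_card_eq_fmp (G.deleteEdges ↑F)
  rw [← hF'card]
  refine (IsFMPSet.fmp_le ⟨?_, ?_⟩).trans (card_union_le F F')
  · rw [coe_union]
    exact Set.union_subset hF (hF'G.trans (SimpleGraph.edgeSet_mono (G.deleteEdges_le _)))
  · rwa [coe_union, ← SimpleGraph.deleteEdges_deleteEdges]

lemma exists_le_fmp_eq (hk : k ≤ G.fmp) : ∃ H ≤ G, H.fmp = k := by
  obtain ⟨F, ⟨hFG, hF⟩, hFcard⟩ := exists_isFMPSet_card_eq_fmp G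
  obtain ⟨F', hF'F, hF'card⟩ := exists_subset_card_eq (hFcard.symm ▸ Nat.sub_le G.fmp k)
  have hrest : IsFMPSet (G.deleteEdges ↑F') (F \ F') := by
    constructor
    · rw [SimpleGraph.edgeSet_deleteEdges, coe_sdiff]
      exact Set.sdiff_subset_sdiff_left hFG
    · rwa [SimpleGraph.deleteEdges_deleteEdges, ← coe_union, union_sdiff_of_subset hF'F]
  have hupper := hrest.fmp_le
  have hlower := fmp_le_card_add_fmp_deleteEdges ((coe_subset.2 hF'F).trans hFG)
  rw [card_sdiff_of_subset hF'F] at hupper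
  exact ⟨G.deleteEdges ↑F', G.deleteEdges_le _, by omega⟩

end Preclusion

section LowerBounds

variable [Fintype V] [DecidableEq V] {G : SimpleGraph V} {k : ℕ}

lemma le_fmp_of_card_lt_two_mul [Nonempty V] [DecidableRel G.Adj]
    (hdeg : ∀ v, k + 1 ≤ G.degree v) (hcard : Fintype.card V < 2 * k) : k ≤ G.fmp := by
  refine le_fmp fun F hF => (hasAdjPerm_deleteEdges hdeg fun a ha hacard => ?_).hasFPM
  obtain rfl | ha2 : a = 1 ∨ 2 ≤ a := by omega
  · simp only [Nat.choose_succ_self, zero_le, inf_of_le_right, add_zero, tsub_self, mul_zero,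
      one_mul, Order.lt_add_one_iff]
    omega
  · have hmin := min_le_left #F (a.choose 2)
    obtain ⟨b, rfl⟩ := Nat.exists_eq_add_of_le ha2
    obtain ⟨c, rfl⟩ := Nat.exists_eq_add_of_le (show 2 + b ≤ k by omega)
    rw [show 2 + b - 1 = b + 1 by omega]
    nlinarith

lemma le_fmp_of_isClique_of_isClique {C D : Finset V} (hk : 6 ≤ k) (hC : G.IsClique C)
    (hD : G.IsClique D) (hCD : Cᶜ ⊆ D) (hCcard : k + 1 ≤ #C) (hDcard : k + 1 ≤ #D)
    (hCccard : k ≤ #Cᶜ) (hDccard : k ≤ #Dᶜ) : k ≤ G.fmp := by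
  have : Nonempty V := (card_pos.1 (by omega : 0 < #C)).to_type
  refine le_fmp fun F hF => ?_
  have hDC : Dᶜ ⊆ C := compl_le_iff_compl_le.1 hCD
  have hinter (S : Finset (Sym2 V)) : #(F ∩ S) ≤ #F := card_le_card inter_subset_left
  have hdisj : Disjoint (F ∩ Cᶜ.sym2) (F ∩ Dᶜ.sym2) := by
    refine disjoint_left.2 fun e heC heD => ?_
    obtain ⟨v, hv⟩ : ∃ v, v ∈ e := ⟨_, e.out_fst_mem⟩
    exact mem_compl.1 (mem_sym2_iff.1 (mem_inter.1 heC).2 v hv)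
      (hDC (mem_sym2_iff.1 (mem_inter.1 heD).2 v hv))
  have hsum : #(F ∩ Cᶜ.sym2) + #(F ∩ Dᶜ.sym2) ≤ #F := by
    rw [← card_union_of_disjoint hdisj]
    exact card_le_card (union_subset inter_subset_left inter_subset_left)
  have hFC := hinter C.sym2
  have hFD := hinter D.sym2
  obtain hFCc | hFDc : #(F ∩ Cᶜ.sym2) + 2 ≤ k ∨ #(F ∩ Dᶜ.sym2) + 2 ≤ k := by omega
  · exact hasFPM_deleteEdges_of_isClique_of_isClique_compl hC (hD.subset (coe_subset.2 hCD))
      (by omega) (by omega) (by omega) (by omega)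
  · exact hasFPM_deleteEdges_of_isClique_of_isClique_compl hD (hC.subset (coe_subset.2 hDC))
      (by omega) (by omega) (by omega) (by omega)

end LowerBounds

section CayleySumGraph

variable {M : Type*} [AddCommGroup M]

/-- The Cayley sum graph of `S`: distinct elements are adjacent when their sum lies in `S`. An
element whose double lies in `S` would carry a loop, which a simple graph drops, so that its degree
is one less than that of the other elements. -/
def cayleySumGraph (S : Finset M) : SimpleGraph M where
  Adj x y := x ≠ y ∧ x + y ∈ S
  symm := ⟨fun x y h => ⟨h.1.symm, add_comm x y ▸ h.2⟩⟩
  loopless := ⟨fun _ h => h.1 rfl⟩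

variable [Fintype M] (S : Finset M)

lemma degree_cayleySumGraph_add [DecidableEq M] [DecidableRel (cayleySumGraph S).Adj] (x : M) :
    (cayleySumGraph S).degree x + (if x + x ∈ S then 1 else 0) = #S := by
  have hshift : #{y | x + y ∈ S} = #S :=
    card_bij (fun y _ => x + y) (fun y hy => (mem_filter.1 hy).2)
      (fun _ _ _ _ h => add_left_cancel h) fun z hz => ⟨-x + z, by simpa using hz, by simp⟩
  have hnbr : (cayleySumGraph S).neighborFinset x = ({y | x + y ∈ S} : Finset M).erase x := by
    ext y
    rw [SimpleGraph.mem_neighborFinset, mem_erase, mem_filter_univ, ne_comm]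
    rfl
  rw [← SimpleGraph.card_neighborFinset_eq_degree, hnbr, ← hshift]
  split_ifs with hx
  · exact card_erase_add_one (by simpa using hx)
  · rw [erase_eq_of_notMem (by simpa using hx), add_zero]

lemma two_mul_ncard_edgeSet_cayleySumGraph_add (hM : Odd (Fintype.card M)) :
    2 * (cayleySumGraph S).edgeSet.ncard + #S = Fintype.card M * #S := by
  classical
  have hdouble : ∑ x : M, (if x + x ∈ S then 1 else 0) = #S := by
    have hcop : (Nat.card M).Coprime 2 := by
      rwa [Nat.card_eq_fintype_card, Nat.coprime_two_right]
    have := Equiv.sum_comp (nsmulCoprime hcop) fun x => if x ∈ S then 1 else 0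
    simpa [two_nsmul] using this
  calc 2 * (cayleySumGraph S).edgeSet.ncard + #S
      = ∑ x, ((cayleySumGraph S).degree x + (if x + x ∈ S then 1 else 0)) := by
        rw [sum_add_distrib, hdouble, sum_degree_eq_two_mul_ncard_edgeSet]
    _ = Fintype.card M * #S := by
        simp only [degree_cayleySumGraph_add, sum_const, smul_eq_mul, card_univ]

end CayleySumGraph

section CliqueUnion

/-- The union of the complete graphs on `C` and on `D`. -/
def cliqueUnion (C D : Finset V) : SimpleGraph V :=
  .fromEdgeSet (↑C.sym2 ∪ ↑D.sym2)

lemma isClique_cliqueUnion_left (C D : Finset V) : (cliqueUnion C D).IsClique C :=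
  fun _ hx _ hy hxy =>
    (SimpleGraph.fromEdgeSet_adj _).2 ⟨Or.inl (mk_mem_sym2_iff.2 ⟨hx, hy⟩), hxy⟩

lemma isClique_cliqueUnion_right (C D : Finset V) : (cliqueUnion C D).IsClique D :=
  fun _ hx _ hy hxy =>
    (SimpleGraph.fromEdgeSet_adj _).2 ⟨Or.inr (mk_mem_sym2_iff.2 ⟨hx, hy⟩), hxy⟩

lemma two_mul_ncard_edgeSet_cliqueUnion_le (C D : Finset V) :
    2 * (cliqueUnion C D).edgeSet.ncard ≤ #C * (#C - 1) + #D * (#D - 1) := by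
  classical
  let K (S : Finset V) : Finset (Sym2 V) := S.offDiag.image Sym2.mk.uncurry
  have hK (S : Finset V) : 2 * #(K S) = #S * (#S - 1) := by
    rw [Sym2.two_mul_card_image_offDiag, offDiag_card, Nat.mul_sub_one]
  have hsub : (cliqueUnion C D).edgeSet ⊆ ↑(K C ∪ K D) := by
    intro e he
    induction e with | _ x y =>
    obtain ⟨h | h, hxy⟩ := (SimpleGraph.fromEdgeSet_adj _).1 he
    · obtain ⟨hx, hy⟩ := mk_mem_sym2_iff.1 h
      exact mem_union_left _ (mem_image.2 ⟨(x, y), mem_offDiag.2 ⟨hx, hy, hxy⟩, rfl⟩)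
    · obtain ⟨hx, hy⟩ := mk_mem_sym2_iff.1 h
      exact mem_union_right _ (mem_image.2 ⟨(x, y), mem_offDiag.2 ⟨hx, hy, hxy⟩, rfl⟩)
  calc 2 * (cliqueUnion C D).edgeSet.ncard ≤ 2 * #(K C ∪ K D) := by
        rw [← Set.ncard_coe_finset]
        exact Nat.mul_le_mul_left 2 (Set.ncard_le_ncard hsub)
    _ ≤ 2 * (#(K C) + #(K D)) := Nat.mul_le_mul_left 2 (card_union_le _ _)
    _ = #C * (#C - 1) + #D * (#D - 1) := by rw [mul_add, hK, hK]

end CliqueUnion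

section FewEdges

variable {n k : ℕ}

lemma exists_le_fmp_and_ncard_edgeSet_le_of_odd (hn : Odd n) (hkn : k + 2 ≤ n) (hnk : n < 2 * k) :
    ∃ G : SimpleGraph (Fin n), k ≤ G.fmp ∧ 2 * G.edgeSet.ncard ≤ (n - 1) * (k + 2) := by
  classical
  have : NeZero n := ⟨by omega⟩
  obtain ⟨S, -, hS⟩ := exists_subset_card_eq (s := (univ : Finset (Fin n))) (n := k + 2) (by simpa)
  refine ⟨cayleySumGraph S, le_fmp_of_card_lt_two_mul (fun x => ?_) (by simpa), ?_⟩
  · have := degree_cayleySumGraph_add S x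
    split_ifs at this <;> omega
  · have := two_mul_ncard_edgeSet_cayleySumGraph_add S (by simpa)
    rw [hS, Fintype.card_fin] at this
    rw [Nat.sub_one_mul]
    omega

lemma exists_le_fmp_and_ncard_edgeSet_le_two_mul_add_one (hk : 6 ≤ k) :
    ∃ G : SimpleGraph (Fin (2 * k + 1)), k ≤ G.fmp ∧ G.edgeSet.ncard ≤ k * (k + 1) := by
  let c : Fin (2 * k + 1) := ⟨k, by omega⟩
  have hC : #(Iic c) = k + 1 := Fin.card_Iic c
  have hD : #(Ici c) = k + 1 := by simp only [Fin.card_Ici, c]; omega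
  have hCD : (Iic c)ᶜ ⊆ Ici c := fun x hx => mem_Ici.2 (not_le.1 (mt mem_Iic.2 (mem_compl.1 hx))).le
  refine ⟨cliqueUnion (Iic c) (Ici c), ?_, ?_⟩
  · exact le_fmp_of_isClique_of_isClique hk (isClique_cliqueUnion_left _ _)
      (isClique_cliqueUnion_right _ _) hCD hC.ge hD.ge
      (by rw [card_compl, Fintype.card_fin]; omega) (by rw [card_compl, Fintype.card_fin]; omega)
  · have := two_mul_ncard_edgeSet_cliqueUnion_le (Iic c) (Ici c)
    rw [hC, hD, Nat.add_sub_cancel] at this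
    linarith

lemma exists_isLeast_ncard_edgeSet (G : SimpleGraph (Fin n)) (hG : k ≤ G.fmp) (hn : 1 ≤ n) :
    ∃ m, IsLeast {m | ∃ H : SimpleGraph (Fin n), H.fmp = k ∧ H.edgeSet.ncard = m} m ∧
      (n * k + 1) / 2 ≤ m ∧ m ≤ G.edgeSet.ncard := by
  have : NeZero n := ⟨by omega⟩
  obtain ⟨H, hHG, hH⟩ := exists_le_fmp_eq hG
  have hleast := isLeast_csInf (s := {m | ∃ H : SimpleGraph (Fin n),
    H.fmp = k ∧ H.edgeSet.ncard = m}) ⟨_, H, hH, rfl⟩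
  refine ⟨_, hleast, ?_, (hleast.2 ⟨H, hH, rfl⟩).trans
    (Set.ncard_le_ncard (SimpleGraph.edgeSet_mono hHG))⟩
  obtain ⟨H', hH', hm⟩ := hleast.1
  have := card_mul_fmp_le_two_mul_ncard_edgeSet H'
  rw [Fintype.card_fin, hH', hm] at this
  omega

end FewEdges

end FMP

theorem s_nk_case3 (n k l r : ℕ) (hn : 1 ≤ n) (hk6 : 6 ≤ k) (hkn : k ≤ n - 2)
    (hdecomp : n = l * (k + 1) + r) (hr : r ≤ k)
    (hcase : 1 ≤ r ∧ Even (k + r) ∧ l = 1) :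
    ∃ m : ℕ,
      IsLeast {m : ℕ | ∃ G : SimpleGraph (Fin n), G.fmp = k ∧ G.edgeSet.ncard = m} m ∧
      (n * k + 1) / 2 ≤ m ∧ 2 * m ≤ (n - 1) * (k + 2) := by
  obtain ⟨hr1, ⟨q, hq⟩, rfl⟩ := hcase
  obtain ⟨G, hfmp, hedges⟩ : ∃ G : SimpleGraph (Fin n),
      k ≤ G.fmp ∧ 2 * G.edgeSet.ncard ≤ (n - 1) * (k + 2) := by
    obtain rfl | hrk := eq_or_ne r k
    · obtain rfl : n = 2 * r + 1 := by omega
      obtain ⟨G, hfmp, hedges⟩ := FMP.exists_le_fmp_and_ncard_edgeSet_le_two_mul_add_one hk6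
      exact ⟨G, hfmp, by rw [Nat.add_sub_cancel]; nlinarith⟩
    · exact FMP.exists_le_fmp_and_ncard_edgeSet_le_of_odd ⟨q, by omega⟩ (by omega) (by omega)
  obtain ⟨m, hleast, hlower, hupper⟩ := FMP.exists_isLeast_ncard_edgeSet G hfmp hn
  exact ⟨m, hleast, hlower, by omega⟩
end

section
/- Let n ≥ 9 be an odd positive integer. Then s(n,2) = n + 3; that is, the minimum number of edges of a graph of order n with fractional matching preclusion number 2 equals n + 3. -/
open Finset

variable {V : Type*}

/-! `2 ≤ fmp G` means that every edge gets weight `0` in some fractional perfect matching, so a set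
containing more than half of the vertices spans at least two edges. If `G` is connected of odd order
`n` and had at most `n + 2` edges, counting with such sets would show that every cut misses at least
three edges, hence has at most `n - 1`. The edges between consecutive levels of the distance to a
root form a cut with at least `n - 1` edges, so they form a spanning tree and a maximum cut.
By maximality at most one edge inside a level leaves the branch of the tree at a given vertex.
Choose `v` of maximal level such that its branch contains an edge `xz` inside a level: the branches
at two children `w₁`, `w₂` of `v` are then joined by `xz` alone. As `x` has degree two, `xz` has
weight `1` in some fractional perfect matching, and it has weight `0` in another. Weighting the two
branches with alternating signs gives `f(vw₁) + f(vw₂) = c ± 2 f(xz)` with `c` independent of `f`,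
so this quantity, which lies in `[0, 1]`, would have to change by `2`.
A disconnected `G` has an odd component, and all degrees outside it are at least two. Equality holds
for a wheel with an even rim in which only four consecutive spokes are kept. -/

namespace FracMatching

section FractionalMatchings

variable [Fintype V] [DecidableEq V] {G : SimpleGraph V} {f : Sym2 V → ℝ}

lemma sum_filter_mem_eq_sum (f : Sym2 V → ℝ) (v : V) :
    ∑ e ∈ univ.filter (fun e : Sym2 V => v ∈ e), f e = ∑ u, f s(v, u) := by
  symm
  refine sum_bij (fun u _ => s(v, u)) (by simp) (fun _ _ _ _ => Sym2.congr_right.1) (fun e he => ?_)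
    (by simp)
  obtain ⟨u, rfl⟩ := (mem_filter.1 he).2
  exact ⟨u, mem_univ u, rfl⟩

lemma sum_mk_eq_one (hf : G.IsFracPerfectMatching f) (v : V) : ∑ u, f s(v, u) = 1 :=
  (sum_filter_mem_eq_sum f v).symm.trans (hf.2.2 v)

lemma eq_zero_of_not_adj (hf : G.IsFracPerfectMatching f) {u v : V} (h : ¬ G.Adj u v) :
    f s(u, v) = 0 :=
  hf.2.1 _ h

lemma exists_adj_ne_zero (hf : G.IsFracPerfectMatching f) (v : V) :
    ∃ u, G.Adj v u ∧ f s(v, u) ≠ 0 := by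
  obtain ⟨u, -, hu⟩ := exists_ne_zero_of_sum_ne_zero ((sum_mk_eq_one hf v).trans_ne one_ne_zero)
  exact ⟨u, by_contra fun h => hu (eq_zero_of_not_adj hf h), hu⟩

lemma sum_mk_le_one (hf : G.IsFracPerfectMatching f) (A : Finset V) (v : V) :
    ∑ u ∈ A, f s(v, u) ≤ 1 :=
  (sum_le_univ_sum_of_nonneg fun u => (hf.1 s(v, u)).1).trans_eq (sum_mk_eq_one hf v)

lemma card_le_card_compl_of_eq_zero (hf : G.IsFracPerfectMatching f) {A : Finset V}
    (hA : ∀ a ∈ A, ∀ b ∈ A, f s(a, b) = 0) : #A ≤ #Aᶜ := by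
  have hrow : ∀ a ∈ A, ∑ b ∈ Aᶜ, f s(a, b) = 1 := fun a ha => by
    rw [← sum_mk_eq_one hf a, ← sum_add_sum_compl A, sum_eq_zero (hA a ha), zero_add]
  have : (#A : ℝ) ≤ #Aᶜ := calc
    (#A : ℝ) = ∑ a ∈ A, ∑ b ∈ Aᶜ, f s(a, b) := by simp [sum_congr rfl hrow]
    _ = ∑ b ∈ Aᶜ, ∑ a ∈ A, f s(b, a) := by simp only [sum_comm (s := A), Sym2.eq_swap]
    _ ≤ ∑ b ∈ Aᶜ, 1 := sum_le_sum fun b _ => sum_mk_le_one hf A b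
    _ = #Aᶜ := by simp
  exact_mod_cast this

lemma isFracPerfectMatching_deleteEdges_iff {F : Set (Sym2 V)} :
    (G.deleteEdges F).IsFracPerfectMatching f ↔
      G.IsFracPerfectMatching f ∧ ∀ e ∈ F, f e = 0 := by
  simp only [SimpleGraph.IsFracPerfectMatching, SimpleGraph.edgeSet_deleteEdges, Set.mem_sdiff,
    not_and_or, not_not, or_imp, forall_and]
  tauto

lemma two_le_fmp_iff [Nonempty V] :
    2 ≤ G.fmp ↔ ∀ e, ∃ f, G.IsFracPerfectMatching f ∧ f e = 0 := by
  classical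
  let v : V := Classical.arbitrary V
  constructor
  · intro h e
    by_contra! hne
    have hle : G.fmp ≤ #({e} ∩ G.edgeFinset) := by
      refine Nat.sInf_le ⟨_, by simp, rfl, fun ⟨f, hf⟩ => ?_⟩
      obtain ⟨hf, hf0⟩ := isFracPerfectMatching_deleteEdges_iff.1 hf
      have he : e ∈ G.edgeSet := by_contra fun he => hne f hf (hf.2.1 e he)
      exact hne f hf (hf0 e (by simpa using he))
    have := hle.trans (card_le_card inter_subset_left)
    rw [card_singleton] at this
    omega
  · intro h
    refine le_csInf ⟨_, G.edgeFinset, by simp, rfl, fun ⟨f, hf⟩ => ?_⟩ ?_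
    · obtain ⟨u, hu, -⟩ := exists_adj_ne_zero hf v
      simp at hu
    · rintro _ ⟨F, -, rfl, hF⟩
      by_contra! hlt
      have : Nonempty (Sym2 V) := ⟨s(v, v)⟩
      obtain ⟨e, he⟩ : ∃ e, F ⊆ {e} := card_le_one_iff_subset_singleton.1 (by omega)
      obtain ⟨f, hf, hfe⟩ := h e
      refine hF ⟨f, isFracPerfectMatching_deleteEdges_iff.2 ⟨hf, fun e' he' => ?_⟩⟩
      rwa [mem_singleton.1 (he he')]

lemma exists_adj_ne_of_two_le_fmp (h : 2 ≤ G.fmp) (v w : V) : ∃ u, G.Adj v u ∧ u ≠ w := by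
  have : Nonempty V := ⟨v⟩
  obtain ⟨f, hf, hf0⟩ := two_le_fmp_iff.1 h s(v, w)
  obtain ⟨u, hu, hne⟩ := exists_adj_ne_zero hf v
  exact ⟨u, hu, fun huw => hne (huw ▸ hf0)⟩

lemma sum_filter_mem_mk {a b : V} (hab : a ≠ b) (y : V → ℝ) :
    ∑ v with v ∈ s(a, b), y v = y a + y b := by
  rw [← sum_pair hab]
  congr 1
  ext v
  simp

lemma sum_eq_sum_mul_of_add_eq_zero (hf : G.IsFracPerfectMatching f) (y : V → ℝ)
    {T : Finset (Sym2 V)} (hT : ∀ a b, G.Adj a b → s(a, b) ∉ T → y a + y b = 0) :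
    ∑ v, y v = ∑ e ∈ T, (∑ v with v ∈ e, y v) * f e := by
  calc ∑ v, y v = ∑ v, ∑ e with v ∈ e, y v * f e := by
        simp only [← mul_sum, hf.2.2, mul_one]
    _ = ∑ e, ∑ v with v ∈ e, y v * f e := sum_comm' (by simp)
    _ = ∑ e, (∑ v with v ∈ e, y v) * f e := by simp only [sum_mul]
    _ = ∑ e ∈ T, (∑ v with v ∈ e, y v) * f e := by
        refine (sum_subset (subset_univ T) ?_).symm
        rintro ⟨a, b⟩ - hab
        by_cases hadj : G.Adj a b
        · rw [sum_filter_mem_mk hadj.ne, hT a b hadj hab, zero_mul]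
        · rw [eq_zero_of_not_adj hf hadj, mul_zero]

end FractionalMatchings

section Cuts

variable [Fintype V] [DecidableEq V] {G : SimpleGraph V} [DecidableRel G.Adj] {A B : Finset V}

/-- The edges of `G` with both ends in `A`. -/
def edgesIn (G : SimpleGraph V) [DecidableRel G.Adj] (A : Finset V) : Finset (Sym2 V) :=
  G.edgeFinset ∩ A.sym2

/-- The edges of `G` with exactly one end in `A`. -/
def cutEdges (G : SimpleGraph V) [DecidableRel G.Adj] (A : Finset V) : Finset (Sym2 V) :=
  G.edgeFinset \ (A.sym2 ∪ Aᶜ.sym2)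

@[simp]
lemma mk_mem_edgesIn {a b : V} : s(a, b) ∈ edgesIn G A ↔ G.Adj a b ∧ a ∈ A ∧ b ∈ A := by
  simp [edgesIn]

@[simp]
lemma mk_mem_cutEdges {a b : V} : s(a, b) ∈ cutEdges G A ↔ G.Adj a b ∧ ¬ (a ∈ A ↔ b ∈ A) := by
  simp only [cutEdges, mem_sdiff, SimpleGraph.mem_edgeFinset, SimpleGraph.mem_edgeSet, mem_union,
    mk_mem_sym2_iff, mem_compl]
  tauto

lemma edgesIn_mono (h : A ⊆ B) : edgesIn G A ⊆ edgesIn G B :=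
  inter_subset_inter_left (sym2_mono h)

lemma cutEdges_compl : cutEdges G Aᶜ = cutEdges G A := by
  rw [cutEdges, cutEdges, compl_compl, union_comm]

lemma cutEdges_symmDiff : cutEdges G (symmDiff A B) = symmDiff (cutEdges G A) (cutEdges G B) := by
  ext ⟨a, b⟩
  simp only [mk_mem_cutEdges, mem_symmDiff]
  tauto

lemma card_edgesIn_add_card_edgesIn_compl_add_card_cutEdges (G : SimpleGraph V)
    [DecidableRel G.Adj] (A : Finset V) :
    #(edgesIn G A) + #(edgesIn G Aᶜ) + #(cutEdges G A) = #G.edgeFinset := by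
  have hdisj : Disjoint A.sym2 Aᶜ.sym2 := by
    rw [Finset.disjoint_left]
    rintro ⟨a, b⟩ ha hb
    simp_all
  rw [edgesIn, edgesIn, cutEdges, ← card_union_of_disjoint
    (hdisj.mono inter_subset_right inter_subset_right), ← inter_union_distrib_left,
    card_inter_add_card_sdiff]

lemma fmp_le_card_edgesIn (hA : #Aᶜ < #A) : G.fmp ≤ #(edgesIn G A) := by
  refine Nat.sInf_le ⟨edgesIn G A, ?_, rfl, fun ⟨f, hf⟩ => hA.not_ge ?_⟩
  · exact (coe_subset.2 inter_subset_left).trans G.coe_edgeFinset.subset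
  · obtain ⟨hf, hf0⟩ := isFracPerfectMatching_deleteEdges_iff.1 hf
    refine card_le_card_compl_of_eq_zero hf fun a ha b hb => ?_
    by_cases hab : G.Adj a b
    · exact hf0 _ (by simp [hab, ha, hb])
    · exact eq_zero_of_not_adj hf hab

lemma three_le_card_edgesIn (h : 2 ≤ G.fmp) (hA : #Aᶜ + 2 < #A) : 3 ≤ #(edgesIn G A) := by
  have hne : (edgesIn G A).Nonempty :=
    card_pos.1 ((zero_lt_two.trans_le h).trans_le (fmp_le_card_edgesIn (by omega)))
  obtain ⟨⟨a, b⟩, hab⟩ := hne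
  obtain ⟨-, ha, -⟩ := mk_mem_edgesIn.1 hab
  have hlt : #(A.erase a)ᶜ < #(A.erase a) := by
    have := card_add_card_compl A
    have := card_add_card_compl (A.erase a)
    have := card_erase_of_mem ha
    omega
  have hss : edgesIn G (A.erase a) ⊂ edgesIn G A :=
    ssubset_iff_of_subset (edgesIn_mono (erase_subset a A)) |>.2 ⟨s(a, b), hab, by simp⟩
  have := h.trans (fmp_le_card_edgesIn hlt)
  have := card_lt_card hss
  omega

lemma two_mul_card_compl_le_card_cutEdges (h : 2 ≤ G.fmp) (hA : edgesIn G A = ∅)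
    (hcard : #Aᶜ ≤ #A + 1) : 2 * #Aᶜ ≤ #(cutEdges G A) := by
  have hind : ∀ a ∈ A, ∀ b ∈ A, ¬ G.Adj a b := fun a ha b hb hab =>
    notMem_empty s(a, b) (hA ▸ mk_mem_edgesIn.2 ⟨hab, ha, hb⟩)
  have hdisj : (Aᶜ : Set V).PairwiseDisjoint fun v => edgesIn G (insert v A) := by
    intro u hu v hv huv
    rw [Function.onFun, Finset.disjoint_left]
    rintro ⟨a, b⟩ hau hav
    obtain ⟨hadj, hau⟩ := mk_mem_edgesIn.1 hau
    obtain ⟨-, hav⟩ := mk_mem_edgesIn.1 hav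
    simp only [Set.mem_compl_iff, mem_coe] at hu hv
    grind
  have hsub : Aᶜ.biUnion (fun v => edgesIn G (insert v A)) ⊆ cutEdges G A := by
    rintro ⟨a, b⟩ hab
    obtain ⟨v, -, hab⟩ := mem_biUnion.1 hab
    obtain ⟨hadj, ha, hb⟩ := mk_mem_edgesIn.1 hab
    have := hadj.ne
    refine mk_mem_cutEdges.2 ⟨hadj, ?_⟩
    grind
  have htwo : ∀ v ∈ Aᶜ, 2 ≤ #(edgesIn G (insert v A)) := fun v hv => by
    refine h.trans (fmp_le_card_edgesIn ?_)
    have := card_add_card_compl A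
    have := card_add_card_compl (insert v A)
    have := card_insert_of_notMem (mem_compl.1 hv)
    omega
  calc 2 * #Aᶜ ≤ ∑ v ∈ Aᶜ, #(edgesIn G (insert v A)) := by
        simpa [mul_comm] using card_nsmul_le_sum Aᶜ _ 2 htwo
    _ = #(Aᶜ.biUnion fun v => edgesIn G (insert v A)) :=
        (card_biUnion (by simpa using hdisj)).symm
    _ ≤ #(cutEdges G A) := card_le_card hsub

lemma card_cutEdges_add_three_le (h : 2 ≤ G.fmp) (hodd : Odd (Fintype.card V))
    (hE : #G.edgeFinset ≤ Fintype.card V + 2) (A : Finset V) :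
    #(cutEdges G A) + 3 ≤ #G.edgeFinset := by
  wlog hA : #Aᶜ < #A generalizing A
  · have hcard := card_add_card_compl A
    obtain ⟨k, hk⟩ := hodd
    rw [← cutEdges_compl]
    exact this Aᶜ (by rw [compl_compl]; omega)
  have hcard := card_add_card_compl A
  have hsplit := card_edgesIn_add_card_edgesIn_compl_add_card_cutEdges G A
  have htwo := h.trans (fmp_le_card_edgesIn hA)
  by_contra! hlt
  have hempty : edgesIn G Aᶜ = ∅ := card_eq_zero.1 (by omega)
  have hfew : #A ≤ #Aᶜ + 2 := by
    by_contra! hmany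
    have := three_le_card_edgesIn h hmany
    omega
  have hcut := two_mul_card_compl_le_card_cutEdges h hempty
    (by rw [compl_compl]; obtain ⟨k, hk⟩ := hodd; omega)
  rw [compl_compl, cutEdges_compl] at hcut
  omega

end Cuts

section Layerings

variable {G : SimpleGraph V} {d : V → ℕ} {u v w x z : V}

/-- `u` is a child of `v` when the vertices of `G` are arranged in levels by `d`. -/
def IsChild (G : SimpleGraph V) (d : V → ℕ) (u v : V) : Prop :=
  G.Adj u v ∧ d u = d v + 1

lemma exists_isChild_dist (hG : G.Connected) {r : V} (hv : v ≠ r) :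
    ∃ u, IsChild G (G.dist r) v u := by
  obtain ⟨q, hq⟩ := hG.exists_walk_length_eq_dist v r
  cases q with
  | nil => exact absurd rfl hv
  | @cons _ u _ hvu q =>
    have hu : G.dist r u ≤ q.length := G.dist_comm ▸ SimpleGraph.dist_le q
    have hstep := hvu.diff_dist_adj (u := r)
    rw [SimpleGraph.Walk.length_cons, G.dist_comm] at hq
    exact ⟨u, hvu, by omega⟩

variable [Fintype V]

open Classical in
/-- The branch at `w`: the vertices joined to `w` by a path whose levels decrease by one at each
step. -/
noncomputable def branch (G : SimpleGraph V) (d : V → ℕ) (w : V) : Finset V :=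
  {u | Relation.ReflTransGen (IsChild G d) u w}

/-- The vertices on the even levels. -/
def evenLevels (d : V → ℕ) : Finset V :=
  {v | Even (d v)}

lemma mem_branch : u ∈ branch G d w ↔ Relation.ReflTransGen (IsChild G d) u w := by
  simp [branch]

lemma self_mem_branch : w ∈ branch G d w :=
  mem_branch.2 .refl

lemma IsChild.mem_branch (huv : IsChild G d u v) (hv : v ∈ branch G d w) : u ∈ branch G d w :=
  FracMatching.mem_branch.2 (.head huv (FracMatching.mem_branch.1 hv))

lemma branch_subset (hvw : v ∈ branch G d w) : branch G d v ⊆ branch G d w :=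
  fun _ hu => mem_branch.2 ((mem_branch.1 hu).trans (mem_branch.1 hvw))

lemma exists_isChild_of_mem_branch (hu : u ∈ branch G d v) (huv : u ≠ v) :
    ∃ w, IsChild G d w v ∧ u ∈ branch G d w := by
  rcases (mem_branch.1 hu).cases_tail with rfl | ⟨w, huw, hwv⟩
  · exact absurd rfl huv
  · exact ⟨w, hwv, mem_branch.2 huw⟩

lemma level_le_of_mem_branch (hu : u ∈ branch G d w) : d w ≤ d u := by
  rw [mem_branch] at hu
  induction hu with
  | refl => exact le_rfl
  | tail _ hbc ih =>
    have := hbc.2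
    omega

lemma eq_of_mem_branch_of_level_eq (hu : u ∈ branch G d w) (h : d u = d w) : u = w := by
  by_contra hne
  obtain ⟨c, hc, huc⟩ := exists_isChild_of_mem_branch hu hne
  have := level_le_of_mem_branch huc
  have := hc.2
  omega

lemma mem_branch_dist (hG : G.Connected) (r v : V) : v ∈ branch G (G.dist r) r := by
  induction hk : G.dist r v using Nat.strong_induction_on generalizing v with
  | _ k ih =>
    rcases eq_or_ne v r with rfl | hv
    · exact self_mem_branch
    · obtain ⟨u, hu⟩ := exists_isChild_dist hG hv
      exact hu.mem_branch (ih _ (by have := hu.2; omega) u rfl)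

variable [DecidableEq V] [DecidableRel G.Adj]

lemma IsChild.mk_mem_cutEdges_evenLevels (h : IsChild G d u v) :
    s(u, v) ∈ cutEdges G (evenLevels d) := by
  simp only [mk_mem_cutEdges, h.1, evenLevels, mem_filter, mem_univ, true_and, h.2, Nat.even_iff]
  omega

/-- A layering of `G` in which the edges between consecutive levels form a spanning tree, and the
parity of the level is a maximum cut. -/
structure IsTreeLayering (G : SimpleGraph V) [DecidableRel G.Adj] (d : V → ℕ) : Prop where
  level_le : ∀ {u v}, G.Adj u v → d u ≤ d v + 1
  parent_unique : ∀ {u v w}, IsChild G d u v → IsChild G d u w → v = w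
  exists_root : ∃ r, ∀ v, v ∈ branch G d r
  card_cutEdges_le : ∀ A, #(cutEdges G A) ≤ #(cutEdges G (evenLevels d))

namespace IsTreeLayering

variable (hd : IsTreeLayering G d)
include hd

lemma isChild_or_isChild (huv : G.Adj u v) (hne : d u ≠ d v) :
    IsChild G d u v ∨ IsChild G d v u := by
  have h₁ := hd.level_le huv
  have h₂ := hd.level_le huv.symm
  rcases hne.lt_or_gt with hlt | hlt
  · exact .inr ⟨huv.symm, by omega⟩
  · exact .inl ⟨huv, by omega⟩

lemma mk_mem_cutEdges_evenLevels (huv : G.Adj u v) :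
    s(u, v) ∈ cutEdges G (evenLevels d) ↔ d u ≠ d v := by
  have h₁ := hd.level_le huv
  have h₂ := hd.level_le huv.symm
  simp only [mk_mem_cutEdges, huv, evenLevels, mem_filter, mem_univ, true_and, Nat.even_iff]
  omega

lemma parent_mem_branch (huv : IsChild G d u v) (hu : u ∈ branch G d w) (hne : u ≠ w) :
    v ∈ branch G d w := by
  rcases (mem_branch.1 hu).cases_head with rfl | ⟨c, huc, hcw⟩
  · exact absurd rfl hne
  · exact hd.parent_unique huc huv ▸ mem_branch.2 hcw

lemma eq_and_isChild_of_leaves_branch (huv : G.Adj u v) (hne : d u ≠ d v)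
    (hu : u ∈ branch G d w) (hv : v ∉ branch G d w) : u = w ∧ IsChild G d w v := by
  rcases hd.isChild_or_isChild huv hne with h | h
  · have huw : u = w := by_contra fun huw => hv (hd.parent_mem_branch h hu huw)
    exact ⟨huw, huw ▸ h⟩
  · exact absurd (h.mem_branch hu) hv

lemma exists_eq_mk_of_mem_cutEdges_branch {e : Sym2 V}
    (he : e ∈ cutEdges G (branch G d w) ∩ cutEdges G (evenLevels d)) :
    ∃ p, IsChild G d w p ∧ e = s(w, p) := by
  induction e with
  | _ a b =>
    obtain ⟨hcut, heven⟩ := mem_inter.1 he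
    obtain ⟨hab, hcut⟩ := mk_mem_cutEdges.1 hcut
    have hlevel := (hd.mk_mem_cutEdges_evenLevels hab).1 heven
    by_cases ha : a ∈ branch G d w
    · obtain ⟨rfl, h⟩ := hd.eq_and_isChild_of_leaves_branch hab hlevel ha (by tauto)
      exact ⟨b, h, rfl⟩
    · obtain ⟨rfl, h⟩ := hd.eq_and_isChild_of_leaves_branch hab.symm hlevel.symm (by tauto) ha
      exact ⟨a, h, Sym2.eq_swap⟩

lemma card_cutEdges_branch_inter_le_one :
    #(cutEdges G (branch G d w) ∩ cutEdges G (evenLevels d)) ≤ 1 := by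
  refine card_le_one.2 fun e he e' he' => ?_
  obtain ⟨p, hp, rfl⟩ := hd.exists_eq_mk_of_mem_cutEdges_branch he
  obtain ⟨p', hp', rfl⟩ := hd.exists_eq_mk_of_mem_cutEdges_branch he'
  rw [hd.parent_unique hp hp']

/-- Switching the branch from one side of a maximum cut to the other loses at most one edge, so
it may gain at most one. -/
lemma card_cutEdges_branch_sdiff_le_one :
    #(cutEdges G (branch G d w) \ cutEdges G (evenLevels d)) ≤ 1 := by
  set B := cutEdges G (branch G d w)
  set M := cutEdges G (evenLevels d)
  have hmax : #(M \ B) + #(B \ M) ≤ #M := by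
    rw [← card_union_of_disjoint (disjoint_sdiff_sdiff ..)]
    exact (congrArg card cutEdges_symmDiff).symm.trans_le (hd.card_cutEdges_le _)
  have hsplit := card_sdiff_add_card_inter M B
  have hone : #(M ∩ B) ≤ 1 := inter_comm B M ▸ hd.card_cutEdges_branch_inter_le_one
  omega

lemma eq_of_horizontal_leaves_branch {x' z' : V} (hxz : G.Adj x z) (hlevel : d x = d z)
    (hx : x ∈ branch G d w) (hz : z ∉ branch G d w) (hxz' : G.Adj x' z') (hlevel' : d x' = d z')
    (hx' : x' ∈ branch G d w) (hz' : z' ∉ branch G d w) : x' = x ∧ z' = z := by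
  have key : s(x', z') = s(x, z) := by
    refine card_le_one.1 (hd.card_cutEdges_branch_sdiff_le_one (w := w)) _ ?_ _ ?_ <;>
      simp_all [hd.mk_mem_cutEdges_evenLevels]
  rcases Sym2.eq_iff.1 key with h | ⟨rfl, -⟩
  · exact h
  · exact absurd hx' hz

lemma exists_horizontal_of_branch (h : 2 ≤ G.fmp) (w : V) :
    ∃ x ∈ branch G d w, ∃ z, G.Adj x z ∧ d x = d z := by
  obtain ⟨x, hx, hdeep⟩ := exists_max_image (branch G d w) d ⟨w, self_mem_branch⟩
  by_contra! hno
  have hparent : ∀ u, G.Adj x u → IsChild G d x u := fun u hu => by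
    refine (hd.isChild_or_isChild hu (hno x hx u hu)).resolve_right fun hc => ?_
    have := hdeep u (hc.mem_branch hx)
    have := hc.2
    omega
  obtain ⟨p, hp, -⟩ := exists_adj_ne_of_two_le_fmp h x x
  obtain ⟨q, hq, hqp⟩ := exists_adj_ne_of_two_le_fmp h x p
  exact hqp (hd.parent_unique (hparent q hq) (hparent p hp))

end IsTreeLayering

lemma exists_isTreeLayering (hG : G.Connected)
    (hcut : ∀ A, #(cutEdges G A) < Fintype.card V) : ∃ d, IsTreeLayering G d := by
  obtain ⟨r⟩ := hG.nonempty
  set d := G.dist r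
  have hparent : ∀ v : {v // v ≠ r}, ∃ u, IsChild G d v u := fun v => exists_isChild_dist hG v.2
  choose p hp using hparent
  let parentEdge : {v // v ≠ r} → Sym2 V := fun v => s(↑v, p v)
  have hinj : Function.Injective parentEdge := fun a b hab => by
    rcases Sym2.eq_iff.1 hab with ⟨h, -⟩ | ⟨h₁, h₂⟩
    · exact Subtype.ext h
    · have ha := (hp a).2
      have hb := (hp b).2
      rw [h₂] at ha
      rw [← h₁] at hb
      omega
  have hsub : univ.image parentEdge ⊆ cutEdges G (evenLevels d) :=
    image_subset_iff.2 fun v _ => (hp v).mk_mem_cutEdges_evenLevels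
  have hcard : #(univ.image parentEdge) + 1 = Fintype.card V := by
    rw [card_image_of_injective _ hinj, card_univ, Fintype.card_subtype_compl,
      Fintype.card_subtype_eq, Nat.sub_add_cancel (Fintype.card_pos_iff.2 ⟨r⟩)]
  have htree : univ.image parentEdge = cutEdges G (evenLevels d) :=
    eq_of_subset_of_card_le hsub (by have := hcut (evenLevels d); omega)
  have hunique : ∀ {u v}, IsChild G d u v → ∃ hu : u ≠ r, v = p ⟨u, hu⟩ := by
    intro u v h
    obtain ⟨c, -, hc⟩ := mem_image.1 (htree ▸ h.mk_mem_cutEdges_evenLevels)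
    rcases Sym2.eq_iff.1 hc with ⟨rfl, rfl⟩ | ⟨rfl, rfl⟩
    · exact ⟨c.2, rfl⟩
    · have h₁ := h.2
      have h₂ := (hp c).2
      omega
  refine ⟨d, fun {u v} huv => ?_, fun {u v w} hv hw => ?_, ⟨r, mem_branch_dist hG r⟩, fun A => ?_⟩
  · have : d v = d u ∨ d v = d u + 1 ∨ d v = d u - 1 := huv.diff_dist_adj
    omega
  · obtain ⟨_, rfl⟩ := hunique hv
    obtain ⟨_, rfl⟩ := hunique hw
    rfl
  · have := hcut A
    rw [← htree]
    omega

end Layerings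

section Forks

variable [Fintype V] {G : SimpleGraph V} {d : V → ℕ} {v w₁ w₂ x z : V}

/-- An edge `xz` inside a level that joins the branches at two children `w₁`, `w₂` of `v`, neither
of which contains an edge inside a level. With tree edges it closes an odd cycle through `v`. -/
structure IsFork (G : SimpleGraph V) (d : V → ℕ) (v w₁ w₂ x z : V) : Prop where
  isChild_left : IsChild G d w₁ v
  isChild_right : IsChild G d w₂ v
  mem_left : x ∈ branch G d w₁
  mem_right : z ∈ branch G d w₂
  adj : G.Adj x z
  level_eq : d x = d z
  level_ne_left : ∀ a ∈ branch G d w₁, ∀ b ∈ branch G d w₁, G.Adj a b → d a ≠ d b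
  level_ne_right : ∀ a ∈ branch G d w₂, ∀ b ∈ branch G d w₂, G.Adj a b → d a ≠ d b

namespace IsFork

variable (hF : IsFork G d v w₁ w₂ x z)
include hF

lemma symm : IsFork G d v w₂ w₁ z x :=
  ⟨hF.isChild_right, hF.isChild_left, hF.mem_right, hF.mem_left, hF.adj.symm, hF.level_eq.symm,
    hF.level_ne_right, hF.level_ne_left⟩

lemma left_ne_right : w₁ ≠ w₂ := by
  rintro rfl
  exact hF.level_ne_left x hF.mem_left z hF.mem_right hF.adj hF.level_eq

lemma notMem_branch_left : v ∉ branch G d w₁ := fun hv => by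
  have := level_le_of_mem_branch hv
  have := hF.isChild_left.2
  omega

end IsFork

variable [DecidableEq V]

/-- The signs `(-1) ^ d a` on the branches at `w₁` and `w₂`, and zero elsewhere: the dual vector
testing the fractional perfect matchings at a fork. -/
noncomputable def branchSign (G : SimpleGraph V) (d : V → ℕ) (w₁ w₂ a : V) : ℝ :=
  if a ∈ branch G d w₁ ∪ branch G d w₂ then (-1) ^ d a else 0

lemma branchSign_of_mem_left {a : V} (ha : a ∈ branch G d w₁) :
    branchSign G d w₁ w₂ a = (-1) ^ d a :=
  if_pos (mem_union_left _ ha)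

lemma branchSign_comm : branchSign G d w₁ w₂ = branchSign G d w₂ w₁ := by
  ext a
  simp only [branchSign, union_comm]

lemma IsFork.branchSign_base (hF : IsFork G d v w₁ w₂ x z) : branchSign G d w₁ w₂ v = 0 :=
  if_neg (by simp [hF.notMem_branch_left, hF.symm.notMem_branch_left])

variable [DecidableRel G.Adj]

lemma exists_isFork (h : 2 ≤ G.fmp) (hd : IsTreeLayering G d) :
    ∃ v w₁ w₂ x z, IsFork G d v w₁ w₂ x z := by
  classical
  obtain ⟨r, hr⟩ := hd.exists_root
  let above : Finset V :=
    {v | ∃ x ∈ branch G d v, ∃ z ∈ branch G d v, G.Adj x z ∧ d x = d z}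
  have hne : above.Nonempty := by
    obtain ⟨x, hx, z, hxz⟩ := hd.exists_horizontal_of_branch h r
    exact ⟨r, mem_filter.2 ⟨mem_univ r, x, hx, z, hr z, hxz⟩⟩
  obtain ⟨v, hv, hdeep⟩ := exists_max_image above d hne
  obtain ⟨-, x, hx, z, hz, hxz, hlevel⟩ := mem_filter.1 hv
  have hbelow : ∀ w, IsChild G d w v →
      ∀ a ∈ branch G d w, ∀ b ∈ branch G d w, G.Adj a b → d a ≠ d b := by
    intro w hw a ha b hb hab heq
    have := hdeep w (mem_filter.2 ⟨mem_univ w, a, ha, b, hb, hab, heq⟩)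
    have := hw.2
    omega
  have hxv : x ≠ v := fun hxv =>
    hxz.ne (hxv.trans (eq_of_mem_branch_of_level_eq hz (hxv ▸ hlevel.symm)).symm)
  have hzv : z ≠ v := fun hzv =>
    hxz.ne ((eq_of_mem_branch_of_level_eq hx (hzv ▸ hlevel)).trans hzv.symm)
  obtain ⟨w₁, hw₁, hx⟩ := exists_isChild_of_mem_branch hx hxv
  obtain ⟨w₂, hw₂, hz⟩ := exists_isChild_of_mem_branch hz hzv
  exact ⟨v, w₁, w₂, x, z, hw₁, hw₂, hx, hz, hxz, hlevel, hbelow w₁ hw₁, hbelow w₂ hw₂⟩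

namespace IsFork

variable (hF : IsFork G d v w₁ w₂ x z)
include hF

lemma eq_of_horizontal (hd : IsTreeLayering G d) {a b : V} (ha : a ∈ branch G d w₁)
    (hab : G.Adj a b) (hlevel : d a = d b) : a = x ∧ b = z :=
  hd.eq_of_horizontal_leaves_branch hF.adj hF.level_eq hF.mem_left
    (fun hz => hF.level_ne_left x hF.mem_left z hz hF.adj hF.level_eq) hab hlevel ha
    (fun hb => hF.level_ne_left a ha b hb hab hlevel)

lemma not_isChild_left (h : 2 ≤ G.fmp) (hd : IsTreeLayering G d) (c : V) : ¬ IsChild G d c x := by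
  intro hc
  obtain ⟨a, ha, b, hab, hlevel⟩ := hd.exists_horizontal_of_branch h c
  obtain ⟨rfl, -⟩ :=
    hF.eq_of_horizontal hd (branch_subset (hc.mem_branch hF.mem_left) ha) hab hlevel
  have := level_le_of_mem_branch ha
  have := hc.2
  omega

lemma exists_isFracPerfectMatching_eq_one (h : 2 ≤ G.fmp) (hd : IsTreeLayering G d) :
    ∃ f, G.IsFracPerfectMatching f ∧ f s(x, z) = 1 := by
  have hparent : ∀ u, G.Adj x u → u ≠ z → IsChild G d x u := fun u hu huz =>
    (hd.isChild_or_isChild hu fun hlevel =>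
      huz (hF.eq_of_horizontal hd hF.mem_left hu hlevel).2).resolve_right
      (hF.not_isChild_left h hd u)
  obtain ⟨p, hp, hpz⟩ := exists_adj_ne_of_two_le_fmp h x z
  have : Nonempty V := ⟨x⟩
  obtain ⟨f, hf, hfp⟩ := two_le_fmp_iff.1 h s(x, p)
  refine ⟨f, hf, ?_⟩
  rw [← sum_mk_eq_one hf x, sum_eq_single z (fun u _ huz => ?_) (by simp)]
  by_cases hu : G.Adj x u
  · rwa [hd.parent_unique (hparent u hu huz) (hparent p hp hpz)]
  · exact eq_zero_of_not_adj hf hu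

lemma eq_or_eq_or_isChild (hd : IsTreeLayering G d) {a b : V} (ha : a ∈ branch G d w₁)
    (hab : G.Adj a b) : s(a, b) = s(x, z) ∨ s(a, b) = s(w₁, v) ∨
      b ∈ branch G d w₁ ∧ (IsChild G d a b ∨ IsChild G d b a) := by
  by_cases hlevel : d a = d b
  · obtain ⟨rfl, rfl⟩ := hF.eq_of_horizontal hd ha hab hlevel
    exact .inl rfl
  · by_cases hb : b ∈ branch G d w₁
    · exact .inr (.inr ⟨hb, hd.isChild_or_isChild hab hlevel⟩)
    · obtain ⟨rfl, hb⟩ := hd.eq_and_isChild_of_leaves_branch hab hlevel ha hb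
      exact .inr (.inl (by rw [hd.parent_unique hb hF.isChild_left]))

lemma branchSign_add_of_mem_left (hd : IsTreeLayering G d) {a b : V} (ha : a ∈ branch G d w₁)
    (hab : G.Adj a b) (hT : s(a, b) ∉ ({s(x, z), s(w₁, v), s(w₂, v)} : Finset (Sym2 V))) :
    branchSign G d w₁ w₂ a + branchSign G d w₁ w₂ b = 0 := by
  simp only [mem_insert, mem_singleton, not_or] at hT
  obtain ⟨hb, hchild⟩ :=
    ((hF.eq_or_eq_or_isChild hd ha hab).resolve_left hT.1).resolve_left hT.2.1
  rw [branchSign_of_mem_left ha, branchSign_of_mem_left hb]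
  rcases hchild with h | h <;> rw [h.2, pow_succ] <;> ring

lemma branchSign_add (hd : IsTreeLayering G d) {a b : V} (hab : G.Adj a b)
    (hT : s(a, b) ∉ ({s(x, z), s(w₁, v), s(w₂, v)} : Finset (Sym2 V))) :
    branchSign G d w₁ w₂ a + branchSign G d w₁ w₂ b = 0 := by
  wlog ha : a ∈ branch G d w₁ ∪ branch G d w₂ generalizing a b
  · by_cases hb : b ∈ branch G d w₁ ∪ branch G d w₂
    · rw [add_comm]
      exact this hab.symm (by rwa [Sym2.eq_swap (a := b)]) hb
    · rw [branchSign, branchSign, if_neg ha, if_neg hb, add_zero]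
  rcases mem_union.1 ha with ha | ha
  · exact hF.branchSign_add_of_mem_left hd ha hab hT
  · rw [branchSign_comm]
    refine hF.symm.branchSign_add_of_mem_left hd ha hab ?_
    rwa [Sym2.eq_swap (a := z), pair_comm s(w₂, v)]

lemma sum_branchSign (hd : IsTreeLayering G d) {f : Sym2 V → ℝ}
    (hf : G.IsFracPerfectMatching f) :
    ∑ a, branchSign G d w₁ w₂ a =
      2 * (-1) ^ d x * f s(x, z) + (-1) ^ (d v + 1) * (f s(v, w₁) + f s(v, w₂)) := by
  have hlevel₁ := hF.isChild_left.2
  have hlevel₂ := hF.isChild_right.2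
  have hxw : ∀ {w}, d w = d v + 1 → s(x, z) ≠ s(w, v) := by
    intro w hw hxz
    have := hF.level_eq
    rcases Sym2.eq_iff.1 hxz with ⟨rfl, rfl⟩ | ⟨rfl, rfl⟩ <;> omega
  have hwv : s(w₁, v) ≠ s(w₂, v) := fun h => hF.left_ne_right (Sym2.congr_left.1 h)
  have hz : branchSign G d w₁ w₂ z = (-1) ^ d x := by
    rw [branchSign_comm, branchSign_of_mem_left hF.mem_right, hF.level_eq]
  have hw₂ : branchSign G d w₁ w₂ w₂ = (-1) ^ (d v + 1) := by
    rw [branchSign_comm, branchSign_of_mem_left self_mem_branch, hlevel₂]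
  rw [sum_eq_sum_mul_of_add_eq_zero hf _ fun a b => hF.branchSign_add hd,
    sum_insert (by simp [hxw hlevel₁, hxw hlevel₂]), sum_pair hwv,
    sum_filter_mem_mk hF.adj.ne, sum_filter_mem_mk hF.isChild_left.1.ne,
    sum_filter_mem_mk hF.isChild_right.1.ne, hz, hw₂, hF.branchSign_base,
    branchSign_of_mem_left hF.mem_left, branchSign_of_mem_left self_mem_branch, hlevel₁,
    Sym2.eq_swap (a := w₁), Sym2.eq_swap (a := w₂)]
  ring

end IsFork

lemma not_isTreeLayering (h : 2 ≤ G.fmp) (d : V → ℕ) : ¬ IsTreeLayering G d := by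
  intro hd
  obtain ⟨v, w₁, w₂, x, z, hF⟩ := exists_isFork h hd
  obtain ⟨f₁, hf₁, hxz₁⟩ := hF.exists_isFracPerfectMatching_eq_one h hd
  have : Nonempty V := ⟨v⟩
  obtain ⟨f₀, hf₀, hxz₀⟩ := two_le_fmp_iff.1 h s(x, z)
  have hle : ∀ {f}, G.IsFracPerfectMatching f → 0 ≤ f s(v, w₁) ∧ 0 ≤ f s(v, w₂) ∧
      f s(v, w₁) + f s(v, w₂) ≤ 1 := fun {f} hf =>
    ⟨(hf.1 _).1, (hf.1 _).1, by
      simpa [sum_pair hF.left_ne_right] using sum_mk_le_one hf {w₁, w₂} v⟩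
  have h₁ := hF.sum_branchSign hd hf₁
  have h₀ := hF.sum_branchSign hd hf₀
  rw [hxz₁] at h₁
  rw [hxz₀] at h₀
  have := hle hf₁
  have := hle hf₀
  rcases neg_one_pow_eq_or ℝ (d x) with hx | hx <;>
    rcases neg_one_pow_eq_or ℝ (d v + 1) with hv | hv <;> rw [hx, hv] at h₀ h₁ <;> linarith

end Forks

section LowerBound

variable [Fintype V] [DecidableEq V] {G : SimpleGraph V} {S : Set V} [DecidablePred (· ∈ S)]

lemma isFracPerfectMatching_induce {f : Sym2 V → ℝ} (hf : G.IsFracPerfectMatching f)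
    (hS : ∀ u ∈ S, G.neighborSet u ⊆ S) :
    (G.induce S).IsFracPerfectMatching (f ∘ Sym2.map Subtype.val) := by
  refine ⟨fun e => hf.1 _, ?_, fun v => ?_⟩
  · rintro ⟨a, b⟩ hab
    exact hf.2.1 s(a.1, b.1) hab
  · rw [sum_filter_mem_eq_sum, ← sum_mk_eq_one hf v, ← sum_subset (subset_univ S.toFinset)]
    · exact (sum_subtype S.toFinset (by simp) fun u => f s(↑v, u)).symm
    · exact fun u _ hu => eq_zero_of_not_adj hf fun hvu => hu (by simpa using hS v v.2 hvu)

lemma two_le_fmp_induce [Nonempty S] (h : 2 ≤ G.fmp) (hS : ∀ u ∈ S, G.neighborSet u ⊆ S) :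
    2 ≤ (G.induce S).fmp := by
  have : Nonempty V := ‹Nonempty S›.map Subtype.val
  refine two_le_fmp_iff.2 fun e => ?_
  obtain ⟨f, hf, hfe⟩ := two_le_fmp_iff.1 h (e.map Subtype.val)
  exact ⟨_, isFracPerfectMatching_induce hf hS, hfe⟩

variable [DecidableRel G.Adj]

lemma two_le_degree (h : 2 ≤ G.fmp) (v : V) : 2 ≤ G.degree v := by
  obtain ⟨a, ha, -⟩ := exists_adj_ne_of_two_le_fmp h v v
  obtain ⟨b, hb, hba⟩ := exists_adj_ne_of_two_le_fmp h v a
  exact one_lt_card.2 ⟨b, by simpa using hb, a, by simpa using ha, hba⟩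

lemma card_edgeFinset_induce_add_card_le (h : 2 ≤ G.fmp) (hS : ∀ u ∈ S, G.neighborSet u ⊆ S) :
    #(G.induce S).edgeFinset + Fintype.card V ≤ #G.edgeFinset + Fintype.card S := by
  have hin : ∑ v ∈ S.toFinset, G.degree v = 2 * #(G.induce S).edgeFinset := by
    rw [← SimpleGraph.sum_degrees_eq_twice_card_edges,
      sum_subtype (p := (· ∈ S)) S.toFinset (by simp)]
    exact sum_congr rfl fun v _ => (SimpleGraph.degree_induce_of_neighborSet_subset (hS v v.2)).symm
  have hout : 2 * #S.toFinsetᶜ ≤ ∑ v ∈ S.toFinsetᶜ, G.degree v := by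
    simpa [mul_comm] using card_nsmul_le_sum S.toFinsetᶜ (G.degree ·) 2 fun v _ => two_le_degree h v
  have hdeg := G.sum_degrees_eq_twice_card_edges
  rw [← sum_add_sum_compl S.toFinset] at hdeg
  have hcard := card_add_card_compl S.toFinset
  rw [Set.toFinset_card] at hcard
  omega

lemma card_add_three_le_card_edgeFinset_of_connected (hG : G.Connected) (h : 2 ≤ G.fmp)
    (hodd : Odd (Fintype.card V)) : Fintype.card V + 3 ≤ #G.edgeFinset := by
  by_contra! hlt
  obtain ⟨d, hd⟩ := exists_isTreeLayering hG fun A => by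
    have := card_cutEdges_add_three_le h hodd (by omega) A
    omega
  exact not_isTreeLayering h d hd

lemma card_add_three_le_card_edgeFinset (h : 2 ≤ G.fmp) (hodd : Odd (Fintype.card V)) :
    Fintype.card V + 3 ≤ #G.edgeFinset := by
  classical
  obtain ⟨c, hc⟩ : G.oddComponents.Nonempty := by
    refine Set.nonempty_of_ncard_ne_zero (Odd.pos ?_).ne'
    rwa [SimpleGraph.odd_ncard_oddComponents, Nat.card_eq_fintype_card]
  have hclosed : ∀ u ∈ c.supp, G.neighborSet u ⊆ c.supp :=
    fun u hu v huv => (c.mem_supp_congr_adj huv).1 hu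
  have : Nonempty c.supp := c.nonempty_supp.to_subtype
  have hconn : (G.induce c.supp).Connected := c.connected_toSimpleGraph
  have := card_add_three_le_card_edgeFinset_of_connected hconn
    (two_le_fmp_induce h hclosed) (by rwa [← Nat.card_eq_fintype_card])
  have := card_edgeFinset_induce_add_card_le h hclosed
  omega

end LowerBound

lemma exists_isFracPerfectMatching_of_injective [Fintype V] [DecidableEq V] {G : SimpleGraph V}
    {π : V → V} (hπ : Function.Injective π) (hadj : ∀ v, G.Adj v (π v)) :
    ∃ f, G.IsFracPerfectMatching f ∧ ∀ a b, π a ≠ b → π b ≠ a → f s(a, b) = 0 := by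
  let f : Sym2 V → ℝ := Sym2.lift
    ⟨fun u v => ((if π u = v then 1 else 0) + if π v = u then 1 else 0) / 2,
      fun _ _ => congrArg (· / 2) (add_comm ..)⟩
  have hf : ∀ u v, f s(u, v) = ((if π u = v then 1 else 0) + if π v = u then 1 else 0) / 2 :=
    fun _ _ => rfl
  have hzero : ∀ a b, π a ≠ b → π b ≠ a → f s(a, b) = 0 := fun a b ha hb => by simp [hf, ha, hb]
  refine ⟨f, ⟨?_, ?_, fun v => ?_⟩, hzero⟩
  · rintro ⟨u, v⟩
    change 0 ≤ f s(u, v) ∧ f s(u, v) ≤ 1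
    rw [hf]
    split_ifs <;> norm_num
  · rintro ⟨u, v⟩ huv
    refine hzero u v ?_ ?_ <;> rintro rfl
    · exact huv (hadj u)
    · exact huv (hadj v).symm
  · obtain ⟨w, rfl⟩ := Finite.surjective_of_injective hπ v
    rw [sum_filter_mem_eq_sum]
    simp [hf, ← sum_div, sum_add_distrib, hπ.eq_iff]

section PartialWheel

variable {n : ℕ}

/-- The wheel with hub `0` and rim cycle `1, …, n - 1` in which only the spokes to `1`, `2`, `3`
and `4` are kept; the spoke to `1` is the edge `b = a + 1` at `a = 0`. -/
def partialWheel (n : ℕ) : SimpleGraph (Fin n) :=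
  SimpleGraph.fromRel fun a b =>
    b.val = a.val + 1 ∨ (a.val = 0 ∧ 2 ≤ b.val ∧ b.val ≤ 4) ∨ (a.val = 1 ∧ b.val + 1 = n)

/-- The permutation of `0, …, n - 1` that rotates the triangle `0, i, i + 1` of `partialWheel n`
and exchanges the ends of the edges of a perfect matching of the remaining part of the rim. -/
def spokeRotation (n i a : ℕ) : ℕ :=
  if a = 0 then i
  else if a = i then i + 1
  else if a = i + 1 then 0
  else if a % 2 = i % 2 then (if a + 1 = n then 1 else a + 1)
  else (if a = 1 then n - 1 else a - 1)

lemma spokeRotation_lt (hn : 5 ≤ n) {i a : ℕ} (hi : i ≤ 3) (ha : a < n) :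
    spokeRotation n i a < n := by
  unfold spokeRotation
  split_ifs <;> omega

lemma eq_of_spokeRotation_eq (hn : 5 ≤ n) (hodd : Odd n) {i a b : ℕ} (hi : i ∈ Icc 1 3)
    (ha : a < n) (hb : b < n) (hab : spokeRotation n i a = spokeRotation n i b) : a = b := by
  obtain ⟨k, rfl⟩ := hodd
  rw [mem_Icc] at hi
  revert hab
  fun_cases spokeRotation (2 * k + 1) i a <;> fun_cases spokeRotation (2 * k + 1) i b <;> omega

lemma partialWheel_adj_of_eq_spokeRotation (hn : 5 ≤ n) (hodd : Odd n) {i : ℕ}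
    (hi : i ∈ Icc 1 3) {a b : Fin n} (hb : b.val = spokeRotation n i a) :
    (partialWheel n).Adj a b := by
  obtain ⟨k, rfl⟩ := hodd
  rw [mem_Icc] at hi
  rw [partialWheel, SimpleGraph.fromRel_adj, Fin.ne_iff_vne, hb]
  have := a.2
  unfold spokeRotation
  split_ifs <;> omega

lemma exists_spokeRotation_ne (hn : 5 ≤ n) (hodd : Odd n) {a b : ℕ} (hab : a < b) :
    ∃ i ∈ Icc 1 3, spokeRotation n i a ≠ b ∧ spokeRotation n i b ≠ a := by
  obtain ⟨k, rfl⟩ := hodd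
  refine ⟨if a = 0 then (if b ≤ 2 then 3 else 1) else if a % 2 = 1 ∧ b = a + 1 then 2 else 1,
    ?_, ?_⟩
  · rw [mem_Icc]
    split_ifs <;> simp
  · unfold spokeRotation
    split_ifs <;> omega

lemma two_le_fmp_partialWheel (hn : 5 ≤ n) (hodd : Odd n) : 2 ≤ (partialWheel n).fmp := by
  have key : ∀ a b : Fin n, a < b →
      ∃ f, (partialWheel n).IsFracPerfectMatching f ∧ f s(a, b) = 0 := by
    intro a b hab
    obtain ⟨i, hi, ha, hb⟩ := exists_spokeRotation_ne hn hodd hab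
    let π : Fin n → Fin n := fun c =>
      ⟨spokeRotation n i c, spokeRotation_lt hn (mem_Icc.1 hi).2 c.2⟩
    have hπ : Function.Injective π := fun c c' h =>
      Fin.ext (eq_of_spokeRotation_eq hn hodd hi c.2 c'.2 (Fin.ext_iff.1 h))
    obtain ⟨f, hf, hf0⟩ := exists_isFracPerfectMatching_of_injective hπ
      fun c => partialWheel_adj_of_eq_spokeRotation hn hodd hi rfl
    exact ⟨f, hf, hf0 a b (fun h => ha (Fin.ext_iff.1 h)) (fun h => hb (Fin.ext_iff.1 h))⟩
  have : Nonempty (Fin n) := ⟨⟨0, by omega⟩⟩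
  refine two_le_fmp_iff.2 fun e => ?_
  induction e with
  | _ a b =>
    rcases lt_trichotomy a b with hab | rfl | hab
    · exact key a b hab
    · obtain ⟨f, hf, -⟩ := key ⟨0, by omega⟩ ⟨1, by omega⟩ (by simp)
      exact ⟨f, hf, eq_zero_of_not_adj hf (SimpleGraph.irrefl _)⟩
    · rw [Sym2.eq_swap]
      exact key b a hab

lemma fmp_partialWheel_le (hn : 5 ≤ n) (hodd : Odd n) : (partialWheel n).fmp ≤ 2 := by
  classical
  obtain ⟨k, hk⟩ := hodd
  let A : Finset (Fin n) := {a | a.val = 1 ∨ a.val ≠ 0 ∧ a.val % 2 = 0}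
  have hmem : ∀ a, a ∈ A ↔ a.val = 1 ∨ a.val ≠ 0 ∧ a.val % 2 = 0 := by simp [A]
  let one : Fin n := ⟨1, by omega⟩
  have hone : one ∈ A := (hmem one).2 (.inl rfl)
  have hcard : #Aᶜ ≤ #(A.erase one) := by
    refine card_le_card_of_injOn
      (fun a => ⟨if a.val = 0 then n - 1 else a - 1, by split_ifs <;> omega⟩) ?_ ?_
    · intro a ha
      simp only [coe_compl, Set.mem_compl_iff, mem_coe, hmem] at ha
      simp only [coe_erase, Set.mem_sdiff, mem_coe, hmem, Set.mem_singleton_iff, one, Fin.ext_iff]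
      split_ifs <;> omega
    · intro a ha b hb hab
      simp only [coe_compl, Set.mem_compl_iff, mem_coe, hmem] at ha hb
      simp only [Fin.ext_iff] at hab ⊢
      split_ifs at hab <;> omega
  have hsub : edgesIn (partialWheel n) A ⊆
      {s(one, ⟨2, by omega⟩), s(one, ⟨n - 1, by omega⟩)} := by
    rintro ⟨a, b⟩ hab
    obtain ⟨hadj, ha, hb⟩ := mk_mem_edgesIn.1 hab
    rw [hmem] at ha hb
    rw [partialWheel, SimpleGraph.fromRel_adj] at hadj
    change s(a, b) ∈ _
    simp only [mem_insert, mem_singleton, Sym2.eq_iff, Fin.ext_iff, one]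
    omega
  exact (fmp_le_card_edgesIn (hcard.trans_lt (card_erase_lt_of_mem hone))).trans
    ((card_le_card hsub).trans card_le_two)

lemma card_edgeFinset_partialWheel_le [DecidableRel (partialWheel n).Adj] (hn : 5 ≤ n) :
    #(partialWheel n).edgeFinset ≤ n + 3 := by
  have hsub : (partialWheel n).edgeFinset.image (Sym2.map Fin.val) ⊆
      (range (n - 1)).image (fun a => s(a, a + 1)) ∪
        {s(0, 2), s(0, 3), s(0, 4), s(1, n - 1)} := by
    refine image_subset_iff.2 ?_
    rintro ⟨a, b⟩ hab
    have hadj : (partialWheel n).Adj a b := by simpa using hab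
    rw [partialWheel, SimpleGraph.fromRel_adj] at hadj
    change s(a.val, b.val) ∈ _
    simp only [mem_union, mem_image, mem_range, mem_insert, mem_singleton, Sym2.eq_iff]
    rcases hadj with ⟨-, (h | h) | h | h⟩
    · exact .inl ⟨a, by omega, .inl ⟨rfl, h.symm⟩⟩
    · exact .inr (by omega)
    · exact .inl ⟨b, by omega, .inr ⟨rfl, h.symm⟩⟩
    · exact .inr (by omega)
  calc #(partialWheel n).edgeFinset
      = #((partialWheel n).edgeFinset.image (Sym2.map Fin.val)) :=
        (card_image_of_injective _ (Sym2.map.injective Fin.val_injective)).symm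
    _ ≤ (n - 1) + 4 := (card_le_card hsub).trans <| (card_union_le _ _).trans <|
        add_le_add (card_image_le.trans_eq (card_range _)) card_le_four
    _ = n + 3 := by omega

end PartialWheel

end FracMatching

open FracMatching in
theorem s_n_two_general (n : ℕ) (hn : 5 ≤ n) (hodd : Odd n) :
    IsLeast {m : ℕ | ∃ G : SimpleGraph (Fin n), G.fmp = 2 ∧ G.edgeSet.ncard = m}
      (n + 3) := by
  classical
  have lower (G : SimpleGraph (Fin n)) (h : 2 ≤ G.fmp) : n + 3 ≤ G.edgeSet.ncard := by
    rw [← G.coe_edgeFinset, Set.ncard_coe_finset]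
    simpa using card_add_three_le_card_edgeFinset h (by simpa using hodd)
  have htwo := two_le_fmp_partialWheel hn hodd
  have hupper := card_edgeFinset_partialWheel_le hn
  rw [← Set.ncard_coe_finset, SimpleGraph.coe_edgeFinset] at hupper
  refine ⟨⟨partialWheel n, (fmp_partialWheel_le hn hodd).antisymm htwo,
    hupper.antisymm (lower _ htwo)⟩, ?_⟩
  rintro _ ⟨G, hG, rfl⟩
  exact lower G hG.ge

theorem s_n_two (n : ℕ) (hn : 9 ≤ n) (hodd : Odd n) :
    IsLeast {m : ℕ | ∃ G : SimpleGraph (Fin n), G.fmp = 2 ∧ G.edgeSet.ncard = m}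
      (n + 3) :=
  s_n_two_general n (by omega) hodd
end
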